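/- 16·∫₀^∞ I₀(t)[K₀(t)]⁵ t dt = (4√3·π³/27)·∫₀¹ [₂F₁(1/3,2/3;1|x)]²·(1−x)^{−1/2} dx. -/

import Mathlib

open Real MeasureTheory Set

/-- Modified Bessel function `I₀(t) = (1/π)∫₀^π exp(t cos θ) dθ`. -/
noncomputable def I0 (t : ℝ) : ℝ := (1 / π) * ∫ θ in (0:ℝ)..π, exp (t * cos θ)

/-- Modified Bessel function `K₀(t) = ∫₀^∞ exp(−t cosh u) du`. -/
noncomputable def K0 (t : ℝ) : ℝ := ∫ u in Ioi (0:ℝ), exp (-(t * Real.cosh u))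

/-- Rising factorial `(a)ₙ = a(a+1)⋯(a+n−1)`. -/
noncomputable def ris (a : ℝ) (n : ℕ) : ℝ := ∏ k ∈ Finset.range n, (a + k)

/-- Generalized hypergeometric series `ₚF_q(a; b | x)`. -/
noncomputable def pFq (a b : List ℝ) (x : ℝ) : ℝ :=
  ∑' n : ℕ, ((a.map fun p => ris p n).prod / (b.map fun q => ris q n).prod) * x ^ n
    / (n.factorial : ℝ)

local notation "𝓔" => ENNReal.ofReal

theorem subR {s t : Set ℝ} (f f' g : ℝ → ℝ) (G H : ℝ → ℝ) (hs : MeasurableSet s)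
    (hd : ∀ x ∈ s, HasDerivAt f (f' x) x)
    (hf : ∀ x ∈ s, f x ∈ t) (hg : ∀ y ∈ t, g y ∈ s)
    (hl : ∀ x ∈ s, g (f x) = x) (hr : ∀ y ∈ t, f (g y) = y)
    (hGH : ∀ x ∈ s, |f' x| * G (f x) = H x) :
    ∫⁻ x in t, 𝓔 (G x) = ∫⁻ x in s, 𝓔 (H x) := by
  have himg : f '' s = t := by
    ext y; constructor
    · rintro ⟨x, hx, rfl⟩; exact hf x hx
    · intro hy; exact ⟨g y, hg y hy, hr y hy⟩
  have hinj : InjOn f s := fun x hx y hy h => by rw [← hl x hx, ← hl y hy, h]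
  rw [← himg, lintegral_image_eq_lintegral_abs_deriv_mul hs
    (fun x hx => (hd x hx).hasDerivWithinAt) hinj]
  refine setLIntegral_congr_fun hs fun x hx => ?_
  rw [← ENNReal.ofReal_mul (abs_nonneg _), hGH x hx]

theorem even_lint (G : ℝ → ℝ) (hG : ∀ x, G (-x) = G x) :
    ∫⁻ x, 𝓔 (G x) = 2 * ∫⁻ x in Ioi (0:ℝ), 𝓔 (G x) := by
  have h1 : ∫⁻ x in Iio (0:ℝ), 𝓔 (G x) = ∫⁻ x in Ioi (0:ℝ), 𝓔 (G x) := by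
    refine subR (fun x => -x) (fun _ => -1) (fun x => -x) G G measurableSet_Ioi
      (fun x _ => (hasDerivAt_id x).neg) ?_ ?_ ?_ ?_ ?_ <;> simp [hG]
  rw [← lintegral_add_compl _ (measurableSet_Iic (a := (0:ℝ))), compl_Iic,
    setLIntegral_congr (Iio_ae_eq_Iic (a := (0:ℝ))).symm, h1, two_mul]

theorem Kline (z : ℝ) (hz : 0 < z) : ∫⁻ p, 𝓔 (exp (-(z * Real.cosh p))) =
    ∫⁻ a in Ioi (0:ℝ), 𝓔 (exp (-a - z^2/(4*a)) / a) := by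
  rw [← setLIntegral_univ]
  symm
  refine subR (fun p => z/2 * exp p) (fun p => z/2 * exp p) (fun a => log (a / (z/2))) _ _
    MeasurableSet.univ ?_ ?_ ?_ ?_ ?_ ?_
  · intro x _; exact (Real.hasDerivAt_exp x).const_mul _
  · intro x _; simp; positivity
  · simp
  · intro x _
    rw [mul_div_cancel_left₀ _ (by positivity), Real.log_exp]
  · intro y hy
    simp only [mem_Ioi] at hy
    rw [Real.exp_log (by positivity)]; field_simp
  · intro x _
    have he := Real.exp_pos x
    rw [abs_of_pos (by positivity)]
    have h2 : -(z/2 * exp x) - z^2/(4*(z/2*exp x)) = -(z * Real.cosh x) := by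
      rw [Real.cosh_eq, Real.exp_neg]; field_simp; ring
    rw [h2]; field_simp

theorem K0_int (t : ℝ) (ht : 0 < t) :
    IntegrableOn (fun u => exp (-(t * Real.cosh u))) (Ioi (0:ℝ)) := by
  refine (exp_neg_integrableOn_Ioi 0 (b := t/2) (by positivity)).mono' ?_ ?_
  · exact (by fun_prop : Continuous fun u => exp (-(t * Real.cosh u))).aestronglyMeasurable
  · refine Filter.Eventually.of_forall fun u => ?_
    rw [Real.norm_eq_abs, abs_of_pos (Real.exp_pos _)]
    apply Real.exp_le_exp.2
    have : u/2 ≤ Real.cosh u := by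
      rw [Real.cosh_eq]; have := Real.add_one_le_exp u; have := Real.exp_pos (-u); linarith
    nlinarith

theorem K0_lint (t : ℝ) (ht : 0 < t) :
    2 * 𝓔 (K0 t) = ∫⁻ p, 𝓔 (exp (-(t * Real.cosh p))) := by
  rw [even_lint _ (by simp), K0, ofReal_integral_eq_lintegral_ofReal (K0_int t ht)
    (Filter.Eventually.of_forall fun u => (Real.exp_pos _).le)]

theorem K0_nonneg (t : ℝ) : 0 ≤ K0 t := integral_nonneg fun _ => (Real.exp_pos _).le

theorem K0_sq (t : ℝ) (ht : 0 < t) :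
    2 * 𝓔 (K0 t ^ 2) = ∫⁻ q, ∫⁻ a in Ioi (0:ℝ),
      𝓔 (exp (-a - t^2 * Real.cosh q ^ 2 / a) / a) := by
  have h1 : ∀ q : ℝ, ∫⁻ a in Ioi (0:ℝ), 𝓔 (exp (-a - t^2 * Real.cosh q ^ 2 / a) / a)
      = ∫⁻ p, 𝓔 (exp (-(2 * t * Real.cosh q * Real.cosh p))) := by
    intro q
    have := Real.cosh_pos q
    rw [Kline (2*t*Real.cosh q) (by positivity)]
    refine setLIntegral_congr_fun measurableSet_Ioi fun a ha => ?_
    simp only [mem_Ioi] at ha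
    congr 4; field_simp; ring
  simp_rw [h1]
  have h2 : 4 * 𝓔 (K0 t ^ 2) = 2 * ∫⁻ q, ∫⁻ p, 𝓔 (exp (-(2 * t * Real.cosh q * Real.cosh p))) := by
    have e1 : 4 * 𝓔 (K0 t ^ 2) = (2 * 𝓔 (K0 t)) * (2 * 𝓔 (K0 t)) := by
      rw [sq, ENNReal.ofReal_mul (K0_nonneg t)]; ring
    rw [e1, K0_lint t ht]
    rw [← lintegral_const_mul _ (by fun_prop)]
    have e2 : ∀ v : ℝ, (∫⁻ p, 𝓔 (exp (-(t * Real.cosh p)))) * 𝓔 (exp (-(t * Real.cosh v)))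
       = 2 * ∫⁻ q, 𝓔 (exp (-(2 * t * Real.cosh q * Real.cosh (v+q)))) := by
      intro v
      rw [mul_comm, ← lintegral_const_mul _ (by fun_prop)]
      rw [← lintegral_const_mul _ (by fun_prop)]
      have : ∀ p, 𝓔 (exp (-(t * Real.cosh v))) * 𝓔 (exp (-(t * Real.cosh p)))
         = 𝓔 (exp (-(t * Real.cosh v) -(t * Real.cosh p))) := by
        intro p
        rw [← ENNReal.ofReal_mul (Real.exp_pos _).le, ← Real.exp_add]; rfl
      simp_rw [this]
      rw [← setLIntegral_univ, ← setLIntegral_univ (f := fun a => 2 * _)]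
      rw [subR (s := univ) (t := univ) (fun q => 2*q+v) (fun _ => 2) (fun p => (p-v)/2)
        _ (fun q => 2 * (exp (-(2 * t * Real.cosh q * Real.cosh (v+q))))) MeasurableSet.univ]
      · refine lintegral_congr fun q => ?_
        rw [ENNReal.ofReal_mul (by norm_num)]; simp
      · intro x _; simpa using ((hasDerivAt_id x).const_mul 2).add_const v
      · simp
      · simp
      · intro x _; ring
      · intro x _; ring
      · intro x _
        have : Real.cosh v + Real.cosh (2*x+v) = 2 * Real.cosh x * Real.cosh (v+x) := by
          have a1 : 2*x+v = (v+x)+x := by ring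
          have a2 : v = (v+x) - x := by ring
          rw [a1]
          nth_rw 1 [a2]
          rw [Real.cosh_add, Real.cosh_sub]; ring
        rw [abs_of_pos (by norm_num)]
        congr 2
        linear_combination (-t) * this
    simp_rw [e2]
    rw [lintegral_const_mul' _ _ (by norm_num), lintegral_lintegral_swap (by fun_prop)]
    congr 1
    refine lintegral_congr fun q => ?_
    exact lintegral_add_right_eq_self (fun p => 𝓔 (exp (-(2 * t * Real.cosh q * Real.cosh p)))) q
  have h3 : (2:ENNReal) * (2 * 𝓔 (K0 t ^ 2)) = 2 * ∫⁻ q, ∫⁻ p, 𝓔 (exp (-(2 * t * Real.cosh q * Real.cosh p))) := by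
    rw [← h2]; ring
  exact (ENNReal.mul_right_inj (by norm_num) (by norm_num)).1 h3

theorem gauss1 (α c : ℝ) (hα : 0 < α) :
    ∫⁻ x : ℝ, 𝓔 (exp (-α * x^2 + c * x)) = 𝓔 (√(π/α) * exp (c^2/(4*α))) := by
  have h1 : ∀ x : ℝ, 𝓔 (exp (-α * x^2 + c * x))
      = 𝓔 (exp (c^2/(4*α))) * 𝓔 (exp (-α * (x - c/(2*α))^2)) := by
    intro x
    rw [← ENNReal.ofReal_mul (exp_pos _).le, ← Real.exp_add]
    congr 2; field_simp; ring
  simp_rw [h1]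
  rw [lintegral_const_mul _ (by fun_prop),
    lintegral_sub_right_eq_self (fun x => 𝓔 (exp (-α * x^2))),
    ← ofReal_integral_eq_lintegral_ofReal (integrable_exp_neg_mul_sq hα)
      (Filter.Eventually.of_forall fun u => (Real.exp_pos _).le), integral_gaussian,
    ← ENNReal.ofReal_mul (exp_pos _).le, mul_comm]

theorem lint_C (F : ℂ → ENNReal) (hF : Measurable F) :
    ∫⁻ z, F z = ∫⁻ x : ℝ, ∫⁻ y : ℝ, F ⟨x, y⟩ := by
  rw [← (Complex.volume_preserving_equiv_real_prod.symm).lintegral_comp_emb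
    Complex.measurableEquivRealProd.symm.measurableEmbedding]
  rw [Measure.volume_eq_prod]
  exact lintegral_prod _
    (hF.comp Complex.measurableEquivRealProd.symm.measurable).aemeasurable

theorem lint_polar (F : ℂ → ENNReal) (hF : Measurable F) :
    ∫⁻ z, F z = ∫⁻ r in Ioi (0:ℝ), ∫⁻ θ in Ioo (-π) π, 𝓔 r * F (r * (cos θ + sin θ * Complex.I)) := by
  rw [← Complex.lintegral_comp_polarCoord_symm]
  have : polarCoord.target = Ioi (0:ℝ) ×ˢ Ioo (-π) π := rfl
  rw [this, Measure.volume_eq_prod, ← Measure.prod_restrict, lintegral_prod]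
  · simp [Complex.polarCoord_symm_apply]
  · simp only [Complex.polarCoord_symm_apply, smul_eq_mul]
    refine (Measurable.mul (by fun_prop) (hF.comp (by fun_prop))).aemeasurable

theorem gauss2 (α c : ℝ) (hα : 0 < α) :
    ∫⁻ z : ℂ, 𝓔 (exp (-α * ‖z‖^2 + c * z.re)) = 𝓔 (π/α * exp (c^2/(4*α))) := by
  rw [lint_C _ (by fun_prop)]
  have h1 : ∀ x y : ℝ, 𝓔 (exp (-α * ‖(⟨x,y⟩:ℂ)‖^2 + c * (⟨x,y⟩:ℂ).re))
     = 𝓔 (exp (-α * x^2 + c * x)) * 𝓔 (exp (-α * y^2 + 0 * y)) := by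
    intro x y
    rw [← ENNReal.ofReal_mul (exp_pos _).le, ← Real.exp_add, ← Complex.normSq_eq_norm_sq,
      Complex.normSq_mk]
    congr 2; ring
  simp_rw [h1]
  simp_rw [lintegral_const_mul' _ _ ENNReal.ofReal_ne_top]
  rw [lintegral_mul_const _ (by fun_prop), gauss1 _ _ hα, gauss1 _ _ hα,
    ← ENNReal.ofReal_mul (by positivity)]
  congr 1
  have : √(π/α) * √(π/α) = π/α := Real.mul_self_sqrt (by positivity)
  simp; linear_combination exp (c^2/(4*α)) * this

theorem I0_nonneg (t : ℝ) : 0 ≤ I0 t := by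
  unfold I0
  have := intervalIntegral.integral_nonneg (μ := volume) (f := fun θ => exp (t * cos θ)) pi_pos.le
    (fun θ _ => (exp_pos _).le)
  positivity

theorem I0_lint (t : ℝ) : 𝓔 (2 * π) * 𝓔 (I0 t) = ∫⁻ θ in Ioo (-π) π, 𝓔 (exp (t * cos θ)) := by
  have hi : ∀ a b : ℝ, IntervalIntegrable (fun θ => exp (t * cos θ)) volume a b :=
    fun a b => (by fun_prop : Continuous fun θ => exp (t * cos θ)).intervalIntegrable a b
  rw [setLIntegral_congr Ioo_ae_eq_Ioc, ← ofReal_integral_eq_lintegral_ofReal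
    ((intervalIntegrable_iff_integrableOn_Ioc_of_le (by linarith [pi_pos])).1 (hi (-π) π))
      (Filter.Eventually.of_forall fun u => (Real.exp_pos _).le),
    ← ENNReal.ofReal_mul (by positivity), I0,
    ← intervalIntegral.integral_of_le (by linarith [pi_pos])]
  congr 1
  have h2 := intervalIntegral.integral_comp_neg (a := 0) (b := π) (fun θ => exp (t * cos θ))
  simp only [cos_neg, neg_zero] at h2
  rw [← intervalIntegral.integral_add_adjacent_intervals (hi (-π) 0) (hi 0 π), ← h2]
  field_simp; ring

theorem I0_cont : Continuous I0 := by
  unfold I0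
  refine continuous_const.mul ?_
  exact intervalIntegral.continuous_parametric_intervalIntegral_of_continuous' (by fun_prop) _ _

theorem K0_meas : Measurable K0 := by
  unfold K0
  have : StronglyMeasurable (Function.uncurry fun (t u : ℝ) => exp (-(t * Real.cosh u))) :=
    (by fun_prop : Continuous (Function.uncurry fun (t u : ℝ) => exp (-(t * Real.cosh u)))).stronglyMeasurable
  exact (StronglyMeasurable.integral_prod_right (ν := volume.restrict (Ioi (0:ℝ))) this).measurable

theorem I0_gauss (α : ℝ) (hα : 0 < α) :
    ∫⁻ t in Ioi (0:ℝ), 𝓔 (I0 t * exp (-α * t^2) * t) = 𝓔 (exp (1/(4*α)) / (2*α)) := by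
  have h := gauss2 α 1 hα
  rw [lint_polar _ (by fun_prop)] at h
  have h1 : ∀ r ∈ Ioi (0:ℝ), ∫⁻ θ in Ioo (-π) π, 𝓔 r *
      𝓔 (exp (-α * ‖(r * (cos θ + sin θ * Complex.I) : ℂ)‖^2 + 1 * (r * (cos θ + sin θ * Complex.I) : ℂ).re))
      = 𝓔 (2*π) * 𝓔 (I0 r * exp (-α * r^2) * r) := by
    intro r hr
    simp only [mem_Ioi] at hr
    have h2 : ∀ θ : ℝ, 𝓔 r *
      𝓔 (exp (-α * ‖(r * (cos θ + sin θ * Complex.I) : ℂ)‖^2 + 1 * (r * (cos θ + sin θ * Complex.I) : ℂ).re))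
        = 𝓔 (exp (-α * r^2) * r) * 𝓔 (exp (r * cos θ)) := by
      intro θ
      rw [← ENNReal.ofReal_mul hr.le, ← ENNReal.ofReal_mul (by positivity), norm_mul,
        Complex.ofReal_cos, Complex.ofReal_sin, Complex.norm_cos_add_sin_mul_I, Complex.norm_real, Real.norm_of_nonneg hr.le, Real.exp_add]
      congr 1
      simp [← Complex.ofReal_cos, ← Complex.ofReal_sin]; ring
    simp_rw [h2]
    rw [lintegral_const_mul' _ _ ENNReal.ofReal_ne_top, ← I0_lint, mul_comm, mul_assoc,
      ← ENNReal.ofReal_mul (I0_nonneg r), mul_assoc]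
  rw [setLIntegral_congr_fun measurableSet_Ioi h1, lintegral_const_mul' _ _ ENNReal.ofReal_ne_top] at h
  have h3 : 𝓔 (π/α * exp (1^2/(4*α))) = 𝓔 (2*π) * 𝓔 (exp (1/(4*α)) / (2*α)) := by
    rw [← ENNReal.ofReal_mul (by positivity)]; congr 1; field_simp
  rw [h3] at h
  exact (ENNReal.mul_right_inj (by simp [pi_pos]) ENNReal.ofReal_ne_top).1 h

theorem h_form (L : ℝ) (hL : 0 < L) :
    ∫⁻ t in Ioi (0:ℝ), 𝓔 (I0 t * K0 t * exp (-L * t^2) * t)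
      = ∫⁻ v in Ioi (0:ℝ), 𝓔 (exp (-v^2/(4*L)) / (2*L*√(v^2+4))) := by
  have h1 : ∀ t ∈ Ioi (0:ℝ), 2 * 𝓔 (I0 t * K0 t * exp (-L * t^2) * t)
      = ∫⁻ a in Ioi (0:ℝ), 𝓔 (exp (-a)/a) * 𝓔 (I0 t * exp (-(L + 1/(4*a)) * t^2) * t) := by
    intro t ht
    simp only [mem_Ioi] at ht
    have e1 : 2 * 𝓔 (I0 t * K0 t * exp (-L * t^2) * t)
       = 𝓔 (I0 t * exp (-L * t^2) * t) * (2 * 𝓔 (K0 t)) := by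
      have : I0 t * K0 t * exp (-L * t^2) * t = (I0 t * exp (-L * t^2) * t) * K0 t := by ring
      have h0 := I0_nonneg t
      rw [this, ENNReal.ofReal_mul (by positivity)]; ring
    rw [e1, K0_lint t ht, Kline t ht, ← lintegral_const_mul' _ _ ENNReal.ofReal_ne_top]
    refine setLIntegral_congr_fun measurableSet_Ioi fun a ha => ?_
    simp only [mem_Ioi] at ha
    have h0 := I0_nonneg t
    rw [← ENNReal.ofReal_mul (by positivity), ← ENNReal.ofReal_mul (by positivity)]
    congr 1
    have e2 : exp (-L * t^2) * exp (-a - t^2/(4*a)) = exp (-a) * exp (-(L + 1/(4*a)) * t^2) := by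
      rw [← Real.exp_add, ← Real.exp_add]; congr 1; field_simp; ring
    linear_combination (I0 t * t / a) * e2
  have h2 : 2 * ∫⁻ t in Ioi (0:ℝ), 𝓔 (I0 t * K0 t * exp (-L * t^2) * t)
      = 2 * ∫⁻ v in Ioi (0:ℝ), 𝓔 (exp (-v^2/(4*L)) / (2*L*√(v^2+4))) := by
    rw [← lintegral_const_mul' _ _ (by norm_num), setLIntegral_congr_fun measurableSet_Ioi h1]
    have hI := I0_cont.measurable
    rw [lintegral_lintegral_swap (by fun_prop)]
    have h3 : ∀ a ∈ Ioi (0:ℝ), ∫⁻ t in Ioi (0:ℝ), 𝓔 (exp (-a)/a) * 𝓔 (I0 t * exp (-(L + 1/(4*a)) * t^2) * t)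
        = 𝓔 (2 * exp (-a + a/(1+4*a*L)) / (1+4*a*L)) := by
      intro a ha
      simp only [mem_Ioi] at ha
      rw [lintegral_const_mul' _ _ ENNReal.ofReal_ne_top, I0_gauss _ (by positivity),
        ← ENNReal.ofReal_mul (by positivity)]
      congr 1
      have : 1/(4*(L+1/(4*a))) = a/(1+4*a*L) := by field_simp; ring
      rw [this, Real.exp_add]; field_simp; ring
    rw [setLIntegral_congr_fun measurableSet_Ioi h3, ← lintegral_const_mul' _ _ (by norm_num)]
    have h4 : ∀ v : ℝ, 2 * 𝓔 (exp (-v^2/(4*L)) / (2*L*√(v^2+4)))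
       = 𝓔 (exp (-v^2/(4*L)) / (L*√(v^2+4))) := by
      intro v
      rw [← ENNReal.ofReal_ofNat, ← ENNReal.ofReal_mul (by norm_num)]
      congr 1; field_simp
    simp_rw [h4]
    symm
    refine subR (fun a => 4*a*L/√(1+4*a*L)) (fun a => 4*L*(1+2*a*L)/((1+4*a*L)*√(1+4*a*L)))
      (fun v => (v^2+v*√(v^2+4))/2/(4*L)) _ _ measurableSet_Ioi ?_ ?_ ?_ ?_ ?_ ?_
    · intro a ha
      simp only [mem_Ioi] at ha
      have hp : 0 < 1+4*a*L := by positivity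
      have d1 : HasDerivAt (fun a : ℝ => 4*a*L) (4*L) a := by
        simpa using ((hasDerivAt_id a).const_mul 4).mul_const L
      have d2 := (d1.const_add 1).sqrt hp.ne'
      have hs := Real.sqrt_pos.2 hp
      have hq := Real.sq_sqrt hp.le
      refine HasDerivAt.congr_deriv (d1.div d2 hs.ne') ?_
      rw [hq]
      have hq2 : √(1 + 4 * L * a) ^ 2 = 1 + 4*a*L := by rw [← hq]; ring_nf
      field_simp
      ring_nf at hq2 ⊢
      rw [hq2]; ring
    · intro a ha
      simp only [mem_Ioi] at ha ⊢
      positivity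
    · intro a ha
      simp only [mem_Ioi] at ha ⊢
      positivity
    · intro a ha
      simp only [mem_Ioi] at ha
      have hp : 0 < 1+4*a*L := by positivity
      have hs := Real.sqrt_pos.2 hp
      have hq := Real.sq_sqrt hp.le
      have e : (4*a*L/√(1+4*a*L))^2+4 = ((4*a*L+2)/√(1+4*a*L))^2 := by
        rw [div_pow, div_pow, hq]; field_simp; ring
      rw [e, Real.sqrt_sq (by positivity)]
      field_simp
      rw [hq]; ring
    · intro v hv
      simp only [mem_Ioi] at hv
      have hp : 0 < v^2+4 := by positivity
      have hs := Real.sqrt_pos.2 hp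
      have hq := Real.sq_sqrt hp.le
      have e : 1 + 4*((v^2+v*√(v^2+4))/2/(4*L))*L = ((v+√(v^2+4))/2)^2 := by
        field_simp; ring_nf; rw [show 4 + v^2 = v^2+4 by ring, hq]; ring
      rw [e, Real.sqrt_sq (by positivity)]
      field_simp
    · intro a ha
      simp only [mem_Ioi] at ha
      have hp : 0 < 1+4*a*L := by positivity
      have hs := Real.sqrt_pos.2 hp
      have hq := Real.sq_sqrt hp.le
      have e : (4*a*L/√(1+4*a*L))^2+4 = ((4*a*L+2)/√(1+4*a*L))^2 := by
        rw [div_pow, div_pow, hq]; field_simp; ring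
      rw [e, Real.sqrt_sq (by positivity), abs_of_pos (by positivity)]
      have e2 : -(4*a*L/√(1+4*a*L))^2/(4*L) = -a + a/(1+4*a*L) := by
        rw [div_pow, hq]; field_simp; ring
      rw [e2]
      field_simp
      ring
  exact (ENNReal.mul_right_inj (by norm_num) (by norm_num)).1 h2

theorem conv_form (v l m : ℝ) (hl : 0 < l) (hm : 0 < m) :
    ∫⁻ k : ℂ, 𝓔 (exp (-‖k‖^2/(4*l)) / (2*l) * (exp (-‖v-k‖^2/(4*m)) / (2*m)))
      = 𝓔 (2*π) * 𝓔 (exp (-v^2/(4*(l+m))) / (2*(l+m))) := by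
  have h1 : ∀ k : ℂ, 𝓔 (exp (-‖k‖^2/(4*l)) / (2*l) * (exp (-‖v-k‖^2/(4*m)) / (2*m)))
      = 𝓔 (exp (-v^2/(4*m))/(4*l*m)) * 𝓔 (exp (-(1/(4*l)+1/(4*m)) * ‖k‖^2 + (v/(2*m)) * k.re)) := by
    intro k
    rw [← ENNReal.ofReal_mul (by positivity)]
    congr 1
    have : exp (-‖k‖^2/(4*l)) * exp (-‖v-k‖^2/(4*m)) =
      exp (-v^2/(4*m)) * exp (-(1/(4*l)+1/(4*m)) * ‖k‖^2 + (v/(2*m)) * k.re) := by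
      rw [← Real.exp_add, ← Real.exp_add]; congr 1
      rw [← Complex.normSq_eq_norm_sq, ← Complex.normSq_eq_norm_sq, Complex.normSq_apply, Complex.normSq_apply]
      simp; field_simp; ring
    linear_combination (1/(4*l*m)) * this
  simp_rw [h1]
  rw [lintegral_const_mul' _ _ ENNReal.ofReal_ne_top, gauss2 _ _ (by positivity),
    ← ENNReal.ofReal_mul (by positivity), ← ENNReal.ofReal_mul (by positivity)]
  congr 1
  have : -v^2/(4*(l+m)) = -v^2/(4*m) + (v/(2*m))^2/(4*(1/(4*l)+1/(4*m))) := by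
    field_simp; ring
  rw [this, Real.exp_add]; field_simp; ring

/-- The imaginary part function. -/
noncomputable def bb (w : ℝ) : ℝ := (w/2) * ∫ q : ℝ, 1/(Real.cosh q^2+w^2)
/-- The real part function. -/
noncomputable def aa (w : ℝ) : ℝ := 1/√(1+w^2)

theorem cosh_ge_sq (y : ℝ) : 1 + y^2/2 ≤ Real.cosh y := by
  have h3 := Real.cosh_two_mul (y/2)
  rw [show 2*(y/2) = y by ring, Real.cosh_sq] at h3
  have h2 : (y/2)^2 ≤ Real.sinh (y/2)^2 := by
    rw [sq_le_sq]
    rcases le_total 0 (y/2) with h | h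
    · have := Real.self_le_sinh_iff.2 h
      rw [abs_of_nonneg h, abs_of_nonneg (by linarith)]; exact this
    · have := Real.sinh_le_self_iff.2 h
      rw [abs_of_nonpos h, abs_of_nonpos (by linarith)]; linarith
  linarith

theorem sqrt_cosh_ge (q : ℝ) : (1+q^2)/8 ≤ √(Real.cosh q) := by
  apply Real.le_sqrt_of_sq_le
  have h1 := cosh_ge_sq (q/2)
  have h2 : Real.cosh q = 2 * Real.cosh (q/2)^2 - 1 := by
    have := Real.cosh_sq (q/2)
    have h3 := Real.cosh_two_mul (q/2)
    rw [show 2*(q/2) = q by ring] at h3; linarith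
  have h4 : (1+(q/2)^2/2)^2 ≤ Real.cosh (q/2)^2 := by gcongr
  rw [h2]; nlinarith [sq_nonneg q, sq_nonneg (q^2)]

theorem isqrt_cosh_int : Integrable fun q : ℝ => 1/√(Real.cosh q) := by
  refine (integrable_inv_one_add_sq.const_mul 8).mono' ?_ ?_
  · exact (by fun_prop : Measurable fun q : ℝ => 1/√(Real.cosh q)).aestronglyMeasurable
  · refine Filter.Eventually.of_forall fun q => ?_
    rw [Real.norm_of_nonneg (by positivity)]
    have := sqrt_cosh_ge q
    calc 1/√(Real.cosh q) ≤ 1/((1+q^2)/8) := by gcongr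
      _ = _ := by field_simp

theorem bb_int (w : ℝ) : Integrable fun q : ℝ => 1/(Real.cosh q^2+w^2) := by
  refine isqrt_cosh_int.mono' ?_ ?_
  · exact (by fun_prop : Measurable fun q : ℝ => 1/(Real.cosh q^2+w^2)).aestronglyMeasurable
  · refine Filter.Eventually.of_forall fun q => ?_
    have h1 := Real.one_le_cosh q
    rw [Real.norm_of_nonneg (by positivity)]
    apply one_div_le_one_div_of_le (by positivity)
    rw [Real.sqrt_le_left (by positivity)]
    have : 1 ≤ Real.cosh q^2 + w^2 := by nlinarith [sq_nonneg w]
    nlinarith [sq_nonneg w]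

theorem bb_nonneg (w : ℝ) (hw : 0 ≤ w) : 0 ≤ bb w := by
  unfold bb
  have : 0 ≤ ∫ q : ℝ, 1/(Real.cosh q^2+w^2) := integral_nonneg fun q => by positivity
  positivity

theorem aa_pos (w : ℝ) : 0 < aa w := by unfold aa; positivity

theorem b_form (k : ℝ) (hk : 0 < k) :
    ∫⁻ q : ℝ, ∫⁻ a in Ioi (0:ℝ), 𝓔 (exp (-a)/a * (exp (-k^2/(4*(Real.cosh q^2/a)))/(2*(Real.cosh q^2/a))))
      = 2 * 𝓔 (bb (k/2)/k) := by
  have h1 : ∀ q : ℝ, ∫⁻ a in Ioi (0:ℝ),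
      𝓔 (exp (-a)/a * (exp (-k^2/(4*(Real.cosh q^2/a)))/(2*(Real.cosh q^2/a))))
      = 𝓔 ((1/2) * (1/(Real.cosh q^2+(k/2)^2))) := by
    intro q
    have hc := Real.cosh_pos q
    have hb : 0 < 1 + k^2/(4*Real.cosh q^2) := by positivity
    have h2 : ∀ a ∈ Ioi (0:ℝ), 𝓔 (exp (-a)/a * (exp (-k^2/(4*(Real.cosh q^2/a)))/(2*(Real.cosh q^2/a))))
       = 𝓔 (1/(2*Real.cosh q^2) * exp (-(1 + k^2/(4*Real.cosh q^2)) * a)) := by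
      intro a ha
      simp only [mem_Ioi] at ha
      congr 1
      rw [show -(1 + k^2/(4*Real.cosh q^2)) * a = -a + -k^2/(4*(Real.cosh q^2/a)) by
        field_simp; ring, Real.exp_add]
      field_simp
    rw [setLIntegral_congr_fun measurableSet_Ioi h2,
      ← ofReal_integral_eq_lintegral_ofReal ((exp_neg_integrableOn_Ioi 0 hb).const_mul _)
      (Filter.Eventually.of_forall fun u => by positivity),
      integral_const_mul, integral_exp_mul_Ioi (by linarith)]
    congr 1
    rw [mul_zero, Real.exp_zero, neg_div_neg_eq]; field_simp; ring
  simp_rw [h1]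
  rw [← ofReal_integral_eq_lintegral_ofReal ((bb_int _).const_mul _)
      (Filter.Eventually.of_forall fun u => by positivity), integral_const_mul,
      ← ENNReal.ofReal_ofNat, ← ENNReal.ofReal_mul (by norm_num)]
  congr 1
  unfold bb
  field_simp

noncomputable def lam (x : ℝ × ℝ) : ℝ := Real.cosh x.1 ^ 2 / x.2
noncomputable def mu : Measure (ℝ × ℝ) :=
  (volume.restrict (univ ×ˢ Ioi (0:ℝ))).withDensity (fun x => 𝓔 (exp (-x.2)/x.2))

instance : SFinite mu := by unfold mu; infer_instance

theorem lam_meas : Measurable lam := by unfold lam; fun_prop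

theorem mu_ae : ∀ᵐ x ∂mu, 0 < lam x := by
  refine (withDensity_absolutelyContinuous _ _).ae_le ?_
  filter_upwards [ae_restrict_mem (MeasurableSet.univ.prod measurableSet_Ioi)] with x hx
  have : 0 < x.2 := hx.2
  have := Real.cosh_pos x.1
  unfold lam; positivity

theorem mu_lint (f : ℝ × ℝ → ENNReal) (hf : Measurable f) :
    ∫⁻ x, f x ∂mu = ∫⁻ q : ℝ, ∫⁻ a in Ioi (0:ℝ), 𝓔 (exp (-a)/a) * f (q, a) := by
  unfold mu
  rw [lintegral_withDensity_eq_lintegral_mul _ (by fun_prop) hf, Measure.volume_eq_prod,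
    ← Measure.prod_restrict, lintegral_prod _ (by fun_prop), Measure.restrict_univ]
  rfl

theorem K0_mu (t : ℝ) (ht : 0 < t) : 2 * 𝓔 (K0 t ^ 2) = ∫⁻ x, 𝓔 (exp (-lam x * t^2)) ∂mu := by
  rw [K0_sq t ht, mu_lint _ (by have := lam_meas; fun_prop)]
  refine lintegral_congr fun q => ?_
  refine setLIntegral_congr_fun measurableSet_Ioi fun a ha => ?_
  simp only [mem_Ioi] at ha
  simp only [lam]
  rw [← ENNReal.ofReal_mul (by positivity), sub_eq_add_neg, Real.exp_add]
  congr 1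
  rw [show -(t^2*Real.cosh q^2/a) = -(Real.cosh q^2/a)*t^2 by ring]; ring

theorem b_mu (k : ℝ) (hk : 0 < k) :
    ∫⁻ x, 𝓔 (exp (-k^2/(4*lam x))/(2*lam x)) ∂mu = 2 * 𝓔 (bb (k/2)/k) := by
  rw [← b_form k hk, mu_lint _ (by have := lam_meas; fun_prop)]
  refine lintegral_congr fun q => ?_
  refine setLIntegral_congr_fun measurableSet_Ioi fun a ha => ?_
  simp only [mem_Ioi] at ha
  simp only [lam]
  rw [← ENNReal.ofReal_mul (by positivity)]

theorem IKM1 : 4 * ∫⁻ t in Ioi (0:ℝ), 𝓔 (I0 t * K0 t^5 * t) =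
    ∫⁻ x, ∫⁻ y, (∫⁻ v in Ioi (0:ℝ), 𝓔 (exp (-v^2/(4*(lam x + lam y))) / (2*(lam x + lam y)*√(v^2+4)))) ∂mu ∂mu := by
  have hl := lam_meas
  have hI := I0_cont.measurable
  have hK := K0_meas
  have h1 : ∀ t ∈ Ioi (0:ℝ), 4 * 𝓔 (I0 t * K0 t^5 * t) =
      ∫⁻ x, ∫⁻ y, 𝓔 (I0 t * K0 t * exp (-(lam x + lam y) * t^2) * t) ∂mu ∂mu := by
    intro t ht
    simp only [mem_Ioi] at ht
    have hI0 := I0_nonneg t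
    have hK0 := K0_nonneg t
    have e1 : 4 * 𝓔 (I0 t * K0 t^5 * t) = 𝓔 (I0 t * K0 t * t) * ((2 * 𝓔 (K0 t^2)) * (2 * 𝓔 (K0 t^2))) := by
      rw [show I0 t * K0 t^5 * t = (I0 t * K0 t * t) * (K0 t^2 * K0 t^2) by ring,
        ENNReal.ofReal_mul (by positivity), ENNReal.ofReal_mul (sq_nonneg (K0 t))]; ring
    rw [e1, K0_mu t ht, ← lintegral_mul_const _ (by fun_prop), ← lintegral_const_mul _ (by fun_prop)]
    refine lintegral_congr fun x => ?_
    rw [← lintegral_const_mul _ (by fun_prop), ← lintegral_const_mul _ (by fun_prop)]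
    refine lintegral_congr fun y => ?_
    rw [← ENNReal.ofReal_mul (by positivity), ← ENNReal.ofReal_mul (by positivity)]
    congr 1
    rw [← Real.exp_add, show -lam x * t^2 + -lam y * t^2 = -(lam x + lam y) * t^2 by ring]; ring
  rw [← lintegral_const_mul' _ _ (by norm_num), setLIntegral_congr_fun measurableSet_Ioi h1,
    lintegral_lintegral_swap (Measurable.aemeasurable ?_)]
  · refine lintegral_congr_ae ?_
    filter_upwards [mu_ae] with x hx
    rw [lintegral_lintegral_swap (by fun_prop)]
    refine lintegral_congr_ae ?_
    filter_upwards [mu_ae] with y hy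
    rw [h_form _ (by positivity)]
  · have : Measurable (fun p : (ℝ × (ℝ × ℝ)) × (ℝ × ℝ) =>
      𝓔 (I0 p.1.1 * K0 p.1.1 * exp (-(lam p.1.2 + lam p.2) * p.1.1^2) * p.1.1)) := by fun_prop
    exact this.lintegral_prod_right'

theorem bb_meas : Measurable bb := by
  unfold bb
  have : StronglyMeasurable (Function.uncurry fun (w q : ℝ) => 1/(Real.cosh q^2+w^2)) := by
    apply Measurable.stronglyMeasurable; unfold Function.uncurry; fun_prop
  exact Measurable.mul (by fun_prop) (StronglyMeasurable.integral_prod_right (ν := volume) this).measurable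

theorem aa_meas : Measurable aa := by unfold aa; fun_prop

theorem IKM2 : 𝓔 (2*π) * ∫⁻ t in Ioi (0:ℝ), 𝓔 (I0 t * K0 t^5 * t) =
    ∫⁻ v in Ioi (0:ℝ), ∫⁻ k : ℂ, 𝓔 (1/√(v^2+4)) * 𝓔 (bb (‖k‖/2)/‖k‖) * 𝓔 (bb (‖v-k‖/2)/‖v-k‖) := by
  have hl := lam_meas
  have hb := bb_meas
  have h0 : 𝓔 (2*π) * (4 * ∫⁻ t in Ioi (0:ℝ), 𝓔 (I0 t * K0 t^5 * t)) =
    4 * ∫⁻ v in Ioi (0:ℝ), ∫⁻ k : ℂ, 𝓔 (1/√(v^2+4)) * 𝓔 (bb (‖k‖/2)/‖k‖) * 𝓔 (bb (‖v-k‖/2)/‖v-k‖) := by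
    rw [IKM1, ← lintegral_const_mul' _ _ ENNReal.ofReal_ne_top]
    have h1 : ∀ᵐ x ∂mu, 𝓔 (2*π) * ∫⁻ y, (∫⁻ v in Ioi (0:ℝ), 𝓔 (exp (-v^2/(4*(lam x + lam y))) / (2*(lam x + lam y)*√(v^2+4)))) ∂mu
      = ∫⁻ v in Ioi (0:ℝ), ∫⁻ k : ℂ, ∫⁻ y, 𝓔 (1/√(v^2+4)) *
        (𝓔 (exp (-‖k‖^2/(4*lam x)) / (2*lam x)) * 𝓔 (exp (-‖v-k‖^2/(4*lam y)) / (2*lam y))) ∂mu := by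
      filter_upwards [mu_ae] with x hx
      have e1 : ∀ v : ℝ, ∫⁻ k : ℂ, ∫⁻ y, 𝓔 (1/√(v^2+4)) *
        (𝓔 (exp (-‖k‖^2/(4*lam x)) / (2*lam x)) * 𝓔 (exp (-‖v-k‖^2/(4*lam y)) / (2*lam y))) ∂mu
        = ∫⁻ y, (∫⁻ k : ℂ, 𝓔 (1/√(v^2+4)) *
        (𝓔 (exp (-‖k‖^2/(4*lam x)) / (2*lam x)) * 𝓔 (exp (-‖v-k‖^2/(4*lam y)) / (2*lam y)))) ∂mu :=
        fun v => lintegral_lintegral_swap (by fun_prop)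
      simp_rw [e1]
      refine Eq.trans ?_ (lintegral_lintegral_swap (Measurable.aemeasurable ?_)).symm
      · rw [← lintegral_const_mul' _ _ ENNReal.ofReal_ne_top]
        refine lintegral_congr_ae ?_
        filter_upwards [mu_ae] with y hy
        rw [← lintegral_const_mul' _ _ ENNReal.ofReal_ne_top]
        refine lintegral_congr fun v => ?_
        rw [lintegral_const_mul' _ _ ENNReal.ofReal_ne_top]
        have e2 : ∀ k : ℂ, 𝓔 (exp (-‖k‖^2/(4*lam x)) / (2*lam x)) * 𝓔 (exp (-‖v-k‖^2/(4*lam y)) / (2*lam y))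
          = 𝓔 (exp (-‖k‖^2/(4*lam x)) / (2*lam x) * (exp (-‖v-k‖^2/(4*lam y)) / (2*lam y))) := by
          intro k; rw [← ENNReal.ofReal_mul (by positivity)]
        simp_rw [e2]
        rw [conv_form _ _ _ hx hy, mul_left_comm]
        congr 1
        rw [← ENNReal.ofReal_mul (by positivity)]
        congr 1; field_simp
      · have : Measurable (fun p : (ℝ × (ℝ × ℝ)) × ℂ =>
          𝓔 (1/√(p.1.1^2+4)) * (𝓔 (exp (-‖p.2‖^2/(4*lam x)) / (2*lam x)) * 𝓔 (exp (-‖p.1.1-p.2‖^2/(4*lam p.1.2)) / (2*lam p.1.2)))) := by fun_prop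
        exact this.lintegral_prod_right'
    rw [lintegral_congr_ae h1, lintegral_lintegral_swap (Measurable.aemeasurable ?_),
      ← lintegral_const_mul' _ _ (by norm_num)]
    · refine setLIntegral_congr_fun measurableSet_Ioi fun v hv => ?_
      rw [lintegral_lintegral_swap (Measurable.aemeasurable ?_), ← lintegral_const_mul' _ _ (by norm_num)]
      · refine lintegral_congr_ae ?_
        have a1 : ∀ᵐ k : ℂ, k ≠ 0 := by simp [ae_iff]
        have a2 : ∀ᵐ k : ℂ, k ≠ v := by simp [ae_iff]
        filter_upwards [a1, a2] with k hk1 hk2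
        have p1 : 0 < ‖k‖ := norm_pos_iff.2 hk1
        have p2 : 0 < ‖v-k‖ := norm_pos_iff.2 (sub_ne_zero.2 hk2.symm)
        have e3 : ∀ x : ℝ × ℝ, ∫⁻ y, 𝓔 (1/√(v^2+4)) *
          (𝓔 (exp (-‖k‖^2/(4*lam x)) / (2*lam x)) * 𝓔 (exp (-‖v-k‖^2/(4*lam y)) / (2*lam y))) ∂mu
          = 𝓔 (1/√(v^2+4)) * (𝓔 (exp (-‖k‖^2/(4*lam x)) / (2*lam x)) * (2 * 𝓔 (bb (‖v-k‖/2)/‖v-k‖))) := by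
          intro x
          rw [← b_mu _ p2, lintegral_const_mul' _ _ ENNReal.ofReal_ne_top,
            lintegral_const_mul' _ _ ENNReal.ofReal_ne_top]
        simp_rw [e3]
        rw [lintegral_const_mul' _ _ ENNReal.ofReal_ne_top, lintegral_mul_const _ (by fun_prop), b_mu _ p1]
        ring
      · have : Measurable (fun p : ((ℝ × ℝ) × ℂ) × (ℝ × ℝ) =>
          𝓔 (1/√(v^2+4)) * (𝓔 (exp (-‖p.1.2‖^2/(4*lam p.1.1)) / (2*lam p.1.1)) * 𝓔 (exp (-‖v-p.1.2‖^2/(4*lam p.2)) / (2*lam p.2)))) := by fun_prop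
        exact this.lintegral_prod_right'
    · have : Measurable (fun p : (((ℝ × ℝ) × ℝ) × ℂ) × (ℝ × ℝ) =>
          𝓔 (1/√(p.1.1.2^2+4)) * (𝓔 (exp (-‖p.1.2‖^2/(4*lam p.1.1.1)) / (2*lam p.1.1.1)) * 𝓔 (exp (-‖p.1.1.2-p.1.2‖^2/(4*lam p.2)) / (2*lam p.2)))) := by fun_prop
      exact this.lintegral_prod_right'.lintegral_prod_right'
  rw [mul_left_comm] at h0
  exact (ENNReal.mul_right_inj (by norm_num) (by norm_num)).1 h0

theorem lint_scale (v : ℂ) (hv : v ≠ 0) (F : ℂ → ENNReal) :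
    ∫⁻ k, F k = ∫⁻ z, 𝓔 (‖v‖^2) * F (v * z) := by
  have h1 : LinearMap.det (LinearMap.mulLeft ℝ v) = ‖v‖^2 := by
    rw [← Complex.normSq_eq_norm_sq, ← Algebra.norm_complex_apply]; rfl
  have hn : 0 < ‖v‖ := norm_pos_iff.2 hv
  have h2 := Measure.map_linearMap_addHaar_eq_smul_addHaar (volume : Measure ℂ)
    (f := LinearMap.mulLeft ℝ v) (by rw [h1]; positivity)
  have h3 : MeasurableEmbedding (fun z : ℂ => v * z) :=
    (Homeomorph.mulLeft₀ v hv).measurableEmbedding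
  have h4 := h3.lintegral_map (μ := volume) F
  have h5 : ⇑(LinearMap.mulLeft ℝ v) = fun z : ℂ => v * z := rfl
  rw [h5, h1] at h2
  rw [h2, lintegral_smul_measure] at h4
  rw [lintegral_const_mul' _ _ ENNReal.ofReal_ne_top, ← h4, smul_eq_mul, ← mul_assoc,
    ← ENNReal.ofReal_mul (by positivity), abs_of_pos (by positivity), mul_inv_cancel₀ (by positivity)]
  simp

noncomputable def WW (f g h : ℝ → ENNReal) : ENNReal :=
  ∫⁻ z : ℂ, ∫⁻ R in Ioi (0:ℝ), 𝓔 (1/(‖z‖*‖1-z‖)) * (f R * g (R*‖z‖) * h (R*‖1-z‖))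

noncomputable def VV (f g h : ℝ → ENNReal) : ENNReal :=
  ∫⁻ v : ℂ, ∫⁻ k : ℂ, 𝓔 (1/(‖v‖*‖k‖*‖v-k‖)) * (f ‖v‖ * g ‖k‖ * h ‖v-k‖)

theorem lint_radial (F : ℝ → ENNReal) (hF : Measurable F) :
    ∫⁻ z : ℂ, F ‖z‖ = 𝓔 (2*π) * ∫⁻ r in Ioi (0:ℝ), 𝓔 r * F r := by
  rw [lint_polar _ (by fun_prop), ← lintegral_const_mul' _ _ ENNReal.ofReal_ne_top]
  refine setLIntegral_congr_fun measurableSet_Ioi fun r hr => ?_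
  simp only [mem_Ioi] at hr
  have : ∀ θ : ℝ, ‖(r * (cos θ + sin θ * Complex.I) : ℂ)‖ = r := by
    intro θ
    rw [norm_mul, Complex.ofReal_cos, Complex.ofReal_sin, Complex.norm_cos_add_sin_mul_I,
      Complex.norm_real, Real.norm_of_nonneg hr.le, mul_one]
  simp_rw [this]
  rw [setLIntegral_const, Real.volume_Ioo, mul_comm]
  congr 2; ring

theorem VV_WW (f g h : ℝ → ENNReal) (hf : Measurable f) (hg : Measurable g) (hh : Measurable h) :
    VV f g h = 𝓔 (2*π) * WW f g h := by
  have h1 : ∀ᵐ v : ℂ, ∫⁻ k : ℂ, 𝓔 (1/(‖v‖*‖k‖*‖v-k‖)) * (f ‖v‖ * g ‖k‖ * h ‖v-k‖)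
      = ∫⁻ z : ℂ, 𝓔 (1/‖v‖) * (𝓔 (1/(‖z‖*‖1-z‖)) * (f ‖v‖ * g (‖v‖*‖z‖) * h (‖v‖*‖1-z‖))) := by
    have a1 : ∀ᵐ k : ℂ, k ≠ 0 := by simp [ae_iff]
    filter_upwards [a1] with v hv
    have hn : 0 < ‖v‖ := norm_pos_iff.2 hv
    rw [lint_scale v hv]
    refine lintegral_congr fun z => ?_
    have e : v - v*z = v*(1-z) := by ring
    rw [e, norm_mul, norm_mul, ← mul_assoc (𝓔 (‖v‖^2)), ← mul_assoc (𝓔 (1/‖v‖)),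
      ← ENNReal.ofReal_mul (by positivity), ← ENNReal.ofReal_mul (by positivity)]
    congr 2
    rcases eq_or_ne z 0 with rfl | h0
    · simp
    rcases eq_or_ne z 1 with rfl | h1
    · simp
    have p1 : 0 < ‖z‖ := norm_pos_iff.2 h0
    have p2 : 0 < ‖1-z‖ := norm_pos_iff.2 (sub_ne_zero.2 h1.symm)
    field_simp
  unfold VV WW
  rw [lintegral_congr_ae h1, lintegral_lintegral_swap (by fun_prop),
    ← lintegral_const_mul' _ _ ENNReal.ofReal_ne_top]
  refine lintegral_congr fun z => ?_
  rw [lint_radial (fun r => 𝓔 (1/r) * (𝓔 (1/(‖z‖*‖1-z‖)) * (f r * g (r*‖z‖) * h (r*‖1-z‖)))) (by fun_prop)]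
  congr 1
  refine setLIntegral_congr_fun measurableSet_Ioi fun r hr => ?_
  simp only [mem_Ioi] at hr
  rw [← mul_assoc, ← ENNReal.ofReal_mul hr.le, mul_one_div_cancel hr.ne']
  simp

theorem VV_s1 (f g h : ℝ → ENNReal) (hf : Measurable f) (hg : Measurable g) (hh : Measurable h) :
    VV f g h = VV g f h := by
  unfold VV
  rw [lintegral_lintegral_swap (by fun_prop)]
  refine lintegral_congr fun z => lintegral_congr fun k => ?_
  rw [norm_sub_rev, mul_comm ‖k‖ ‖z‖, mul_comm (f _)]

theorem VV_s2 (f g h : ℝ → ENNReal) :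
    VV f g h = VV f h g := by
  unfold VV
  refine lintegral_congr fun v => ?_
  rw [← lintegral_sub_left_eq_self _ v]
  refine lintegral_congr fun k => ?_
  rw [sub_sub_cancel, mul_right_comm, mul_right_comm (f _)]

theorem WW_s1 (f g h : ℝ → ENNReal) (hf : Measurable f) (hg : Measurable g) (hh : Measurable h) :
    WW f g h = WW g f h := by
  have := VV_s1 f g h hf hg hh
  rw [VV_WW _ _ _ hf hg hh, VV_WW _ _ _ hg hf hh] at this
  exact (ENNReal.mul_right_inj (by simp [pi_pos]) ENNReal.ofReal_ne_top).1 this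

theorem WW_s2 (f g h : ℝ → ENNReal) (hf : Measurable f) (hg : Measurable g) (hh : Measurable h) :
    WW f g h = WW f h g := by
  have := VV_s2 f g h
  rw [VV_WW _ _ _ hf hg hh, VV_WW _ _ _ hf hh hg] at this
  exact (ENNReal.mul_right_inj (by simp [pi_pos]) ENNReal.ofReal_ne_top).1 this

theorem IKM3 : 𝓔 (2*π) * ∫⁻ t in Ioi (0:ℝ), 𝓔 (I0 t * K0 t^5 * t) =
    WW (fun w => 𝓔 (aa w)) (fun w => 𝓔 (bb w)) (fun w => 𝓔 (bb w)) := by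
  have ha := aa_meas
  have hb := bb_meas
  rw [IKM2]
  unfold WW
  have h1 : ∀ v ∈ Ioi (0:ℝ), ∫⁻ k : ℂ, 𝓔 (1/√(v^2+4)) * 𝓔 (bb (‖k‖/2)/‖k‖) * 𝓔 (bb (‖v-k‖/2)/‖v-k‖)
     = ∫⁻ z : ℂ, 𝓔 (1/√(v^2+4) * (1/(‖z‖*‖1-z‖) * (bb (v/2*‖z‖) * bb (v/2*‖1-z‖)))) := by
    intro v hv
    simp only [mem_Ioi] at hv
    rw [lint_scale (v:ℂ) (by exact_mod_cast hv.ne')]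
    refine lintegral_congr fun z => ?_
    have e : (v:ℂ) - v*z = v*(1-z) := by ring
    have b1 := bb_nonneg (v * ‖z‖ / 2) (by positivity)
    have b2 := bb_nonneg (v * ‖1-z‖ / 2) (by positivity)
    rw [e, norm_mul, norm_mul, Complex.norm_real, Real.norm_of_nonneg hv.le,
      ← ENNReal.ofReal_mul (by positivity), ← ENNReal.ofReal_mul (by positivity),
      ← ENNReal.ofReal_mul (by positivity)]
    congr 1
    rw [show v/2*‖z‖ = v*‖z‖/2 by ring, show v/2*‖1-z‖ = v*‖1-z‖/2 by ring]
    rcases eq_or_ne z 0 with rfl | h0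
    · simp
    rcases eq_or_ne z 1 with rfl | h1
    · simp
    have p1 : 0 < ‖z‖ := norm_pos_iff.2 h0
    have p2 : 0 < ‖1-z‖ := norm_pos_iff.2 (sub_ne_zero.2 h1.symm)
    field_simp
  rw [setLIntegral_congr_fun measurableSet_Ioi h1, lintegral_lintegral_swap (by fun_prop)]
  refine lintegral_congr fun z => ?_
  have h2 : ∀ R ∈ Ioi (0:ℝ), 𝓔 (1/(‖z‖*‖1-z‖)) * (𝓔 (aa R) * 𝓔 (bb (R*‖z‖)) * 𝓔 (bb (R*‖1-z‖)))
     = 𝓔 (1/(‖z‖*‖1-z‖) * (aa R * bb (R*‖z‖) * bb (R*‖1-z‖))) := by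
    intro R hR
    simp only [mem_Ioi] at hR
    have b1 := bb_nonneg (R * ‖z‖) (by positivity)
    have b2 := bb_nonneg (R * ‖1-z‖) (by positivity)
    have b3 := (aa_pos R).le
    rw [← ENNReal.ofReal_mul (by positivity), ← ENNReal.ofReal_mul (by positivity),
      ← ENNReal.ofReal_mul (by positivity)]
  rw [setLIntegral_congr_fun measurableSet_Ioi h2]
  refine subR (fun R => 2*R) (fun _ => 2) (fun v => v/2) _ _ measurableSet_Ioi ?_ ?_ ?_ ?_ ?_ ?_
  · intro x _; simpa using (hasDerivAt_id x).const_mul 2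
  · intro x hx; simpa using hx
  · intro x hx; simpa using hx
  · intro x hx; ring
  · intro x hx; ring
  · intro R hR
    simp only [mem_Ioi] at hR
    rw [show 2*R/2 = R by ring, abs_of_pos two_pos]
    have : √((2*R)^2+4) = 2 * √(1+R^2) := by
      rw [show (2*R)^2+4 = 2^2*(1+R^2) by ring, Real.sqrt_mul (by positivity), Real.sqrt_sq (by norm_num)]
    rw [this, aa]
    field_simp

theorem den_re (c s : ℝ) (z : ℂ) : ((c:ℂ) - s * z * Complex.I).re = c + s * z.im := by simp
theorem den_im (c s : ℝ) (z : ℂ) : ((c:ℂ) - s * z * Complex.I).im = - (s * z.re) := by simp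

theorem den_bound (c s T : ℝ) (hc : 0 < c) (hs : 0 < s) (hT : 0 < T) (z : ℂ)
    (hz : T ≤ |z.re| ∨ T ≤ z.im) : ‖1/((c:ℂ) - s * z * Complex.I)‖ ≤ 1/(s*T) := by
  rw [norm_div, norm_one]
  refine one_div_le_one_div_of_le (by positivity) ?_
  rcases hz with h | h
  · have := Complex.abs_im_le_norm ((c:ℂ) - s * z * Complex.I)
    rw [den_im, abs_neg, abs_mul, abs_of_pos hs] at this
    exact le_trans (by gcongr) this
  · have := Complex.abs_re_le_norm ((c:ℂ) - s * z * Complex.I)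
    rw [den_re] at this
    have h3 := le_abs_self (c + s*z.im)
    have : s*T ≤ s*z.im := by gcongr
    linarith

theorem den_ne (c s : ℝ) (hc : 0 < c) (hs : 0 < s) (z : ℂ) (hz : 0 ≤ z.im) :
    (c:ℂ) - s * z * Complex.I ≠ 0 := by
  intro h
  have := den_re c s z
  rw [h] at this
  have h2 : 0 ≤ s * z.im := by positivity
  simp at this; linarith

noncomputable def gg (c₁ c₂ c₃ s₁ s₂ s₃ : ℝ) (z : ℂ) : ℂ :=
  1/((c₁:ℂ) - s₁ * z * Complex.I) * (1/((c₂:ℂ) - s₂ * z * Complex.I) * (1/((c₃:ℂ) - s₃ * z * Complex.I)))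

theorem rect (c₁ c₂ c₃ s₁ s₂ s₃ : ℝ) (hc₁ : 0 < c₁) (hc₂ : 0 < c₂) (hc₃ : 0 < c₃)
    (hs₁ : 0 < s₁) (hs₂ : 0 < s₂) (hs₃ : 0 < s₃) : ∫ R : ℝ, gg c₁ c₂ c₃ s₁ s₂ s₃ R = 0 := by
  by_cases hi : Integrable (fun R : ℝ => gg c₁ c₂ c₃ s₁ s₂ s₃ R)
  swap
  · exact integral_undef hi
  have h1 := intervalIntegral_tendsto_integral hi Filter.tendsto_neg_atTop_atBot Filter.tendsto_id
  refine tendsto_nhds_unique h1 ?_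
  have gb : ∀ T : ℝ, 0 < T → ∀ z : ℂ, (T ≤ |z.re| ∨ T ≤ z.im) →
      ‖gg c₁ c₂ c₃ s₁ s₂ s₃ z‖ ≤ 1/(s₁*s₂*s₃)/T^3 := by
    intro T hT z hz
    unfold gg
    rw [norm_mul, norm_mul]
    calc _ ≤ 1/(s₁*T) * (1/(s₂*T) * (1/(s₃*T))) := by
          gcongr
          · exact den_bound _ _ _ hc₁ hs₁ hT z hz
          · exact den_bound _ _ _ hc₂ hs₂ hT z hz
          · exact den_bound _ _ _ hc₃ hs₃ hT z hz
      _ = _ := by field_simp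
  have key : ∀ T : ℝ, 0 < T → ‖∫ x in (-T)..T, gg c₁ c₂ c₃ s₁ s₂ s₃ x‖ ≤ 4/(s₁*s₂*s₃)*(1/T^2) := by
    intro T hT
    have hr := Complex.integral_boundary_rect_eq_zero_of_differentiableOn (gg c₁ c₂ c₃ s₁ s₂ s₃)
      ⟨-T, 0⟩ ⟨T, T⟩ (by
        intro z hz
        have hz2 : 0 ≤ z.im := by
          have := hz.2
          simp only [mem_preimage, uIcc_of_le hT.le] at this
          exact this.1
        have n1 := den_ne c₁ s₁ hc₁ hs₁ z hz2
        have n2 := den_ne c₂ s₂ hc₂ hs₂ z hz2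
        have n3 := den_ne c₃ s₃ hc₃ hs₃ z hz2
        unfold gg
        refine DifferentiableAt.differentiableWithinAt ?_
        fun_prop (disch := assumption))
    simp only [Complex.ofReal_zero, zero_mul, add_zero] at hr
    have e1 : ‖∫ x in (-T)..T, gg c₁ c₂ c₃ s₁ s₂ s₃ (x + T * Complex.I)‖ ≤ 1/(s₁*s₂*s₃)/T^3 * |T - -T| :=
      intervalIntegral.norm_integral_le_of_norm_le_const fun x _ => gb T hT _ (Or.inr (by simp))
    have e2 : ‖∫ y in (0)..T, gg c₁ c₂ c₃ s₁ s₂ s₃ (T + y * Complex.I)‖ ≤ 1/(s₁*s₂*s₃)/T^3 * |T - 0| :=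
      intervalIntegral.norm_integral_le_of_norm_le_const fun x _ => gb T hT _ (Or.inl (by simp [le_abs_self]))
    have e3 : ‖∫ y in (0)..T, gg c₁ c₂ c₃ s₁ s₂ s₃ ((-T:ℝ) + y * Complex.I)‖ ≤ 1/(s₁*s₂*s₃)/T^3 * |T - 0| :=
      intervalIntegral.norm_integral_le_of_norm_le_const fun x _ => gb T hT _ (Or.inl (by simp [le_abs_self]))
    set X := ∫ x in (-T)..T, gg c₁ c₂ c₃ s₁ s₂ s₃ x
    set Y1 := ∫ x in (-T)..T, gg c₁ c₂ c₃ s₁ s₂ s₃ (x + T * Complex.I)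
    set Y2 := ∫ y in (0)..T, gg c₁ c₂ c₃ s₁ s₂ s₃ (T + y * Complex.I)
    set Y3 := ∫ y in (0)..T, gg c₁ c₂ c₃ s₁ s₂ s₃ ((-T:ℝ) + y * Complex.I)
    have hX : X = Y1 - Complex.I * Y2 + Complex.I * Y3 := by
      rw [smul_eq_mul, smul_eq_mul] at hr
      linear_combination hr
    rw [hX]
    have t1 := norm_add_le (Y1 - Complex.I * Y2) (Complex.I * Y3)
    have t2 := norm_sub_le Y1 (Complex.I * Y2)
    rw [norm_mul, Complex.norm_I, one_mul] at t1 t2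
    rw [abs_of_pos (by linarith)] at e1 e2 e3
    have : 4/(s₁*s₂*s₃)*(1/T^2) = 1/(s₁*s₂*s₃)/T^3 * (T - -T) + 1/(s₁*s₂*s₃)/T^3 * (T - 0)
      + 1/(s₁*s₂*s₃)/T^3 * (T - 0) := by field_simp; ring
    linarith
  rw [tendsto_zero_iff_norm_tendsto_zero]
  refine squeeze_zero' (Filter.Eventually.of_forall fun _ => norm_nonneg _)
    (g := fun T => 4/(s₁*s₂*s₃)*(1/T^2)) ?_ ?_
  · filter_upwards [Filter.eventually_gt_atTop 0] with T hT
    exact key T hT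
  · have h2 : Filter.Tendsto (fun T : ℝ => 1/T^2) Filter.atTop (nhds 0) := by
      simpa using (tendsto_pow_neg_atTop (𝕜 := ℝ) (n := 2) (by norm_num))
    simpa using h2.const_mul (4/(s₁*s₂*s₃))

/-- complex combination -/
noncomputable def ff (w : ℝ) : ℂ := ∫ q : ℝ, 1/((Real.cosh q : ℂ) - w * Complex.I)

theorem ff_bd (c w : ℝ) (hc : 1 ≤ c) :
    ‖1/((c : ℂ) - w * Complex.I)‖ ≤ 1/√c * (1+w^2)^(-(1:ℝ)/4) := by
  rw [norm_div, norm_one]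
  have h1 : ‖(c : ℂ) - w * Complex.I‖^2 = c^2+w^2 := by
    rw [← Complex.normSq_eq_norm_sq, Complex.normSq_apply]; simp; ring
  have h2 : (1+w^2)^(-(1:ℝ)/4) = 1/√(√(1+w^2)) := by
    rw [Real.sqrt_eq_rpow, Real.sqrt_eq_rpow, ← Real.rpow_mul (by positivity), neg_div,
      Real.rpow_neg (by positivity)]; norm_num
  have h0 : 0 < √(1+w^2) := by positivity
  rw [h2, one_div_mul_one_div, ← Real.sqrt_mul (by positivity)]
  refine one_div_le_one_div_of_le (by positivity) ?_
  rw [Real.sqrt_le_left (norm_nonneg _), h1]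
  have h3 : √(1+w^2)^2 = 1+w^2 := Real.sq_sqrt (by positivity)
  have : (c*√(1+w^2))^2 ≤ (c^2+w^2)^2 := by
    rw [mul_pow, h3]; nlinarith [sq_nonneg w, sq_nonneg c, mul_nonneg (sq_nonneg c) (sq_nonneg w), sq_nonneg (w^2), mul_nonneg (sq_nonneg c) (by nlinarith : 0 ≤ c^2-1)]
  exact abs_le_of_sq_le_sq' this (by positivity) |>.2

theorem ff_int (w : ℝ) : Integrable fun q : ℝ => 1/((Real.cosh q : ℂ) - w * Complex.I) := by
  refine (isqrt_cosh_int.mul_const ((1+w^2)^(-(1:ℝ)/4))).mono' ?_ ?_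
  · exact (by fun_prop : Measurable fun q : ℝ => 1/((Real.cosh q : ℂ) - w * Complex.I)).aestronglyMeasurable
  · exact Filter.Eventually.of_forall fun q => ff_bd _ _ (Real.one_le_cosh q)

theorem ff_re_int (w : ℝ) : Integrable fun q : ℝ => Real.cosh q/(Real.cosh q^2+w^2) := by
  have := (ff_int w).re
  refine this.congr (Filter.Eventually.of_forall fun q => ?_)
  simp [Complex.normSq_apply]; ring

theorem aa_eq (w : ℝ) : ∫ q : ℝ, Real.cosh q/(Real.cosh q^2+w^2) = π * aa w := by
  have hp : 0 < √(1+w^2) := by positivity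
  have hq : √(1+w^2)^2 = 1+w^2 := Real.sq_sqrt (by positivity)
  have hd : ∀ q, HasDerivAt (fun q => arctan (Real.sinh q / √(1+w^2)) / √(1+w^2))
      (Real.cosh q/(Real.cosh q^2+w^2)) q := by
    intro q
    refine HasDerivAt.congr_deriv ((((Real.hasDerivAt_sinh q).div_const _).arctan).div_const _) ?_
    have : Real.cosh q^2 + w^2 = √(1+w^2)^2 + Real.sinh q^2 := by rw [hq, Real.cosh_sq]; ring
    rw [this]; field_simp
  have l1 : Filter.Tendsto (fun q => arctan (Real.sinh q / √(1+w^2)) / √(1+w^2)) Filter.atTop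
      (nhds (π/2/√(1+w^2))) :=
    Filter.Tendsto.div_const ((tendsto_nhds_of_tendsto_nhdsWithin tendsto_arctan_atTop).comp
      (Real.sinhOrderIso.tendsto_atTop.atTop_div_const hp)) _
  have l2 : Filter.Tendsto (fun q => arctan (Real.sinh q / √(1+w^2)) / √(1+w^2)) Filter.atBot
      (nhds (-(π/2)/√(1+w^2))) :=
    Filter.Tendsto.div_const ((tendsto_nhds_of_tendsto_nhdsWithin tendsto_arctan_atBot).comp
      (Real.sinhOrderIso.tendsto_atBot.atBot_div_const hp)) _
  rw [integral_of_hasDerivAt_of_tendsto hd (ff_re_int w) l2 l1, aa]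
  field_simp; ring

theorem ff_eq (w : ℝ) : ff w = (π * aa w : ℝ) + (2 * bb w : ℝ) * Complex.I := by
  rw [← aa_eq, bb]
  have e : 2 * (w/2 * ∫ q : ℝ, 1/(Real.cosh q^2+w^2)) = ∫ q : ℝ, w * (1/(Real.cosh q^2+w^2)) := by
    rw [integral_const_mul]; ring
  rw [e, ← integral_complex_ofReal, ← integral_complex_ofReal, ← integral_mul_const, ← integral_add]
  · unfold ff
    congr 1; ext q
    have h : ((Real.cosh q : ℂ) - w * Complex.I) ≠ 0 := by
      intro h
      have := congrArg Complex.re h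
      simp at this
      exact (Real.cosh_pos q).ne' this
    have h2 : ((Real.cosh q^2 + w^2 : ℝ) : ℂ) ≠ 0 := by
      have := Real.cosh_pos q
      exact_mod_cast (by positivity : Real.cosh q^2 + w^2 ≠ 0)
    have h3 : ((Real.cosh q^2 + w^2 : ℝ) : ℂ) = ((Real.cosh q : ℂ) - w * Complex.I) * ((Real.cosh q : ℂ) + w * Complex.I) := by
      push_cast; linear_combination ((w:ℂ)^2) * Complex.I_sq
    rw [Complex.ofReal_div, Complex.ofReal_mul, Complex.ofReal_div, Complex.ofReal_one, div_eq_iff h]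
    field_simp
    push_cast
    linear_combination ((w:ℂ)^2) * Complex.I_sq
  · exact (ff_re_int w).ofReal
  · exact ((bb_int w).const_mul w).ofReal.mul_const _

noncomputable def dd (w : ℝ) : ℝ := (1+w^2)^(-(1:ℝ)/4)

theorem dd_meas : Measurable dd := by unfold dd; fun_prop
theorem dd_nonneg (w : ℝ) : 0 ≤ dd w := by unfold dd; positivity

theorem dd_le (s : ℝ) (hs : 0 < s) : ∃ C : ℝ, 0 ≤ C ∧ ∀ R, dd (s*R) ≤ C * dd R := by
  have hm : 0 < min 1 s := lt_min one_pos hs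
  refine ⟨((min 1 s)^2)^(-(1:ℝ)/4), by positivity, fun R => ?_⟩
  unfold dd
  rw [← Real.mul_rpow (by positivity) (by positivity)]
  apply Real.rpow_le_rpow_of_nonpos (by positivity) _ (by norm_num)
  have h1 : (min 1 s)^2 ≤ 1^2 := by gcongr; exact min_le_left _ _
  have h2 : (min 1 s)^2 ≤ s^2 := by gcongr; exact min_le_right _ _
  nlinarith [sq_nonneg R]

theorem dd_int (s₁ s₂ s₃ : ℝ) (hs₁ : 0 < s₁) (hs₂ : 0 < s₂) (hs₃ : 0 < s₃) :
    Integrable fun R => dd (s₁*R) * (dd (s₂*R) * dd (s₃*R)) := by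
  obtain ⟨C₁, h1, b1⟩ := dd_le s₁ hs₁
  obtain ⟨C₂, h2, b2⟩ := dd_le s₂ hs₂
  obtain ⟨C₃, h3, b3⟩ := dd_le s₃ hs₃
  have h := (integrable_rpow_neg_one_add_norm_sq (E := ℝ) (μ := volume) (r := 3/2)
    (by simp; norm_num)).const_mul (C₁*(C₂*C₃))
  have := dd_meas
  refine h.mono' (Measurable.aestronglyMeasurable (by fun_prop)) (Filter.Eventually.of_forall fun R => ?_)
  have p1 := dd_nonneg (s₁*R)
  have p2 := dd_nonneg (s₂*R)
  have p3 := dd_nonneg (s₃*R)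
  have p4 := dd_nonneg R
  rw [Real.norm_of_nonneg (by positivity)]
  have e : (1+‖R‖^2)^(-(3/2:ℝ)/2) = dd R * (dd R * dd R) := by
    unfold dd
    rw [← Real.rpow_add (by positivity), ← Real.rpow_add (by positivity), Real.norm_eq_abs, sq_abs]
    norm_num
  rw [e]
  calc _ ≤ (C₁ * dd R) * ((C₂ * dd R) * (C₃ * dd R)) := by
        gcongr
        · exact b1 R
        · exact b2 R
        · exact b3 R
    _ = _ := by ring

theorem ff_norm (w : ℝ) : ‖ff w‖ ≤ (∫ q : ℝ, 1/√(Real.cosh q)) * dd w := by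
  rw [← integral_mul_const]
  exact norm_integral_le_of_norm_le (isqrt_cosh_int.mul_const _)
    (Filter.Eventually.of_forall fun q => ff_bd _ _ (Real.one_le_cosh q))

theorem ff_zero (s₁ s₂ s₃ : ℝ) (hs₁ : 0 < s₁) (hs₂ : 0 < s₂) (hs₃ : 0 < s₃) :
    ∫ R : ℝ, ff (s₁*R) * (ff (s₂*R) * ff (s₃*R)) = 0 := by
  have h1 : ∀ R : ℝ, ff (s₁*R) * (ff (s₂*R) * ff (s₃*R)) =
      ∫ q : ℝ × (ℝ × ℝ), gg (Real.cosh q.1) (Real.cosh q.2.1) (Real.cosh q.2.2) s₁ s₂ s₃ R := by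
    intro R
    unfold ff gg
    rw [Measure.volume_eq_prod, Measure.volume_eq_prod, ← integral_prod_mul, ← integral_prod_mul]
    push_cast
    rfl
  simp_rw [h1]
  rw [integral_integral_swap]
  · have : ∀ q : ℝ × (ℝ × ℝ), ∫ R : ℝ, gg (Real.cosh q.1) (Real.cosh q.2.1) (Real.cosh q.2.2) s₁ s₂ s₃ R = 0 :=
      fun q => rect _ _ _ _ _ _ (Real.cosh_pos _) (Real.cosh_pos _) (Real.cosh_pos _) hs₁ hs₂ hs₃
    simp_rw [this]
    simp
  · have hq : Integrable (fun q : ℝ × (ℝ × ℝ) => 1/√(Real.cosh q.1) * (1/√(Real.cosh q.2.1) * (1/√(Real.cosh q.2.2)))) :=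
      isqrt_cosh_int.mul_prod (isqrt_cosh_int.mul_prod isqrt_cosh_int)
    have hR := (dd_int s₁ s₂ s₃ hs₁ hs₂ hs₃).mul_prod hq
    refine hR.mono' (Measurable.aestronglyMeasurable ?_) (Filter.Eventually.of_forall fun p => ?_)
    · unfold gg Function.uncurry; fun_prop
    · unfold gg Function.uncurry
      simp only
      have f1 := ff_bd (Real.cosh p.2.1) (s₁*p.1) (Real.one_le_cosh _)
      have f2 := ff_bd (Real.cosh p.2.2.1) (s₂*p.1) (Real.one_le_cosh _)
      have f3 := ff_bd (Real.cosh p.2.2.2) (s₃*p.1) (Real.one_le_cosh _)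
      rw [Complex.ofReal_mul] at f1 f2 f3
      rw [norm_mul, norm_mul]
      calc _ ≤ _ := mul_le_mul f1 (mul_le_mul f2 f3 (norm_nonneg _) (by positivity)) (by positivity) (by positivity)
        _ = _ := by unfold dd; ring

theorem ff_re_abs (w : ℝ) : π * aa w ≤ (∫ q : ℝ, 1/√(Real.cosh q)) * dd w := by
  refine le_trans ?_ (ff_norm w)
  refine le_trans ?_ (Complex.abs_re_le_norm _)
  rw [ff_eq]; simpa using le_abs_self (π * aa w)

theorem ff_im_abs (w : ℝ) : |2 * bb w| ≤ (∫ q : ℝ, 1/√(Real.cosh q)) * dd w := by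
  refine le_trans ?_ (ff_norm w)
  refine le_trans ?_ (Complex.abs_im_le_norm _)
  rw [ff_eq]; simp

theorem prod_int (f g h : ℝ → ℝ) (C s₁ s₂ s₃ : ℝ) (hs₁ : 0 < s₁) (hs₂ : 0 < s₂) (hs₃ : 0 < s₃)
    (mf : Measurable f) (mg : Measurable g) (mh : Measurable h)
    (hf : ∀ w, |f w| ≤ C * dd w) (hg : ∀ w, |g w| ≤ C * dd w) (hh : ∀ w, |h w| ≤ C * dd w) :
    Integrable fun R => f (s₁*R) * (g (s₂*R) * h (s₃*R)) := by
  refine ((dd_int s₁ s₂ s₃ hs₁ hs₂ hs₃).const_mul (C*(C*C))).mono'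
    (Measurable.aestronglyMeasurable (by fun_prop)) (Filter.Eventually.of_forall fun R => ?_)
  rw [norm_mul, norm_mul]
  have n1 := (abs_nonneg _).trans (hf (s₁*R))
  have n2 := (abs_nonneg _).trans (hg (s₂*R))
  simp only [Real.norm_eq_abs]
  calc _ ≤ _ := mul_le_mul (hf _) (mul_le_mul (hg _) (hh _) (abs_nonneg _) n2) (by positivity) n1
    _ = _ := by ring

theorem bb_neg (w : ℝ) : bb (-w) = - bb w := by unfold bb; simp; ring
theorem aa_neg (w : ℝ) : aa (-w) = aa w := by unfold aa; simp

theorem sum_rule (s₁ s₂ s₃ : ℝ) (hs₁ : 0 < s₁) (hs₂ : 0 < s₂) (hs₃ : 0 < s₃) :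
    ∫⁻ R in Ioi (0:ℝ), 𝓔 (aa (s₁*R) * (bb (s₂*R) * bb (s₃*R)) + bb (s₁*R) * (aa (s₂*R) * bb (s₃*R))
      + bb (s₁*R) * (bb (s₂*R) * aa (s₃*R)))
    = ∫⁻ R in Ioi (0:ℝ), 𝓔 (π^2/4 * (aa (s₁*R) * (aa (s₂*R) * aa (s₃*R)))) := by
  have ma := aa_meas
  have mb := bb_meas
  set C := (∫ q : ℝ, 1/√(Real.cosh q)) with hC
  have C0 : 0 ≤ C := integral_nonneg fun q => by positivity
  have ba : ∀ w, |aa w| ≤ C * dd w := by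
    intro w
    have := ff_re_abs w
    rw [abs_of_pos (aa_pos w)]
    refine le_trans ?_ this
    nlinarith [Real.pi_gt_three, aa_pos w]
  have bb' : ∀ w, |bb w| ≤ C * dd w := by
    intro w
    have := ff_im_abs w
    rw [abs_mul, abs_two] at this
    refine le_trans ?_ this
    nlinarith [abs_nonneg (bb w)]
  have i0 := prod_int aa aa aa C s₁ s₂ s₃ hs₁ hs₂ hs₃ ma ma ma ba ba ba
  have i1 := prod_int aa bb bb C s₁ s₂ s₃ hs₁ hs₂ hs₃ ma mb mb ba bb' bb'
  have i2 := prod_int bb aa bb C s₁ s₂ s₃ hs₁ hs₂ hs₃ mb ma mb bb' ba bb'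
  have i3 := prod_int bb bb aa C s₁ s₂ s₃ hs₁ hs₂ hs₃ mb mb ma bb' bb' ba
  have j : Integrable (fun R => aa (s₁*R) * (bb (s₂*R) * bb (s₃*R)) + bb (s₁*R) * (aa (s₂*R) * bb (s₃*R))
      + bb (s₁*R) * (bb (s₂*R) * aa (s₃*R))) := ((i1.add i2).add i3)
  have j0 := i0.const_mul (π^2/4)
  set P : ℝ → ℝ := fun R => π^2/4 * (aa (s₁*R) * (aa (s₂*R) * aa (s₃*R))) -
    (aa (s₁*R) * (bb (s₂*R) * bb (s₃*R)) + bb (s₁*R) * (aa (s₂*R) * bb (s₃*R))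
      + bb (s₁*R) * (bb (s₂*R) * aa (s₃*R))) with hP
  have iP : Integrable P := j0.sub j
  have h0 : ∫ R, P R = 0 := by
    have hz := congrArg Complex.re (ff_zero s₁ s₂ s₃ hs₁ hs₂ hs₃)
    have e : ∀ R, (ff (s₁*R) * (ff (s₂*R) * ff (s₃*R))).re = 4*π * P R := by
      intro R
      rw [ff_eq, ff_eq, ff_eq]
      simp [hP]; ring
    by_cases hi : Integrable (fun R => ff (s₁*R) * (ff (s₂*R) * ff (s₃*R)))
    · have h2 := integral_re hi
      simp only [RCLike.re_eq_complex_re] at h2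
      rw [← h2] at hz
      simp_rw [e] at hz
      rw [integral_const_mul] at hz
      have := pi_pos
      simpa [pi_pos.ne'] using hz
    · exfalso; apply hi
      refine ((dd_int s₁ s₂ s₃ hs₁ hs₂ hs₃).const_mul (C*(C*C))).mono' ?_ (Filter.Eventually.of_forall fun R => ?_)
      · apply Measurable.aestronglyMeasurable
        have : ff = fun w => ((π * aa w : ℝ):ℂ) + (2 * bb w : ℝ) * Complex.I := funext ff_eq
        rw [this]; fun_prop
      · rw [norm_mul, norm_mul]
        have n1 := (norm_nonneg _).trans (ff_norm (s₁*R))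
        have n2 := (norm_nonneg _).trans (ff_norm (s₂*R))
        calc _ ≤ _ := mul_le_mul (ff_norm _) (mul_le_mul (ff_norm _) (ff_norm _) (norm_nonneg _) n2) (by positivity) n1
          _ = _ := by ring
  have hev : ∀ R, P (-R) = P R := by
    intro R; simp only [hP, mul_neg, bb_neg, aa_neg]; ring
  have h1 : ∫ R in Ioi (0:ℝ), P R = 0 := by
    have e1 : ∫ R in Iic (0:ℝ), P R = ∫ R in Ioi (0:ℝ), P R := by
      have := integral_comp_neg_Ioi (0:ℝ) P
      simp only [hev, neg_zero] at this; exact this.symm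
    have e2 := intervalIntegral.integral_Iic_add_Ioi (b := (0:ℝ)) iP.integrableOn iP.integrableOn
    rw [e1, h0] at e2; linarith
  rw [← ofReal_integral_eq_lintegral_ofReal j.integrableOn, ← ofReal_integral_eq_lintegral_ofReal j0.integrableOn]
  · congr 1
    have := integral_sub (j0.integrableOn (s := Ioi (0:ℝ))) (j.integrableOn (s := Ioi (0:ℝ)))
    have e3 : ∫ R in Ioi (0:ℝ), P R = _ := this
    rw [h1] at e3
    exact (sub_eq_zero.1 e3.symm).symm
  · exact Filter.Eventually.of_forall fun R => by
      have := aa_pos (s₁*R)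
      have := aa_pos (s₂*R)
      have := aa_pos (s₃*R)
      positivity
  · filter_upwards [ae_restrict_mem measurableSet_Ioi] with R hR
    simp only [mem_Ioi] at hR
    have := aa_pos (s₁*R)
    have := aa_pos (s₂*R)
    have := aa_pos (s₃*R)
    have := bb_nonneg (s₁*R) (by positivity)
    have := bb_nonneg (s₂*R) (by positivity)
    have := bb_nonneg (s₃*R) (by positivity)
    simp only [Pi.add_apply, Pi.zero_apply]
    positivity

theorem IKM4 : 𝓔 24 * ∫⁻ t in Ioi (0:ℝ), 𝓔 (I0 t * K0 t^5 * t) =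
    𝓔 π * WW (fun w => 𝓔 (aa w)) (fun w => 𝓔 (aa w)) (fun w => 𝓔 (aa w)) := by
  have ma := aa_meas
  have mb := bb_meas
  have mea : Measurable (fun w => 𝓔 (aa w)) := by fun_prop
  have meb : Measurable (fun w => 𝓔 (bb w)) := by fun_prop
  have h1 : WW (fun w => 𝓔 (aa w)) (fun w => 𝓔 (bb w)) (fun w => 𝓔 (bb w))
     + WW (fun w => 𝓔 (bb w)) (fun w => 𝓔 (aa w)) (fun w => 𝓔 (bb w))
     + WW (fun w => 𝓔 (bb w)) (fun w => 𝓔 (bb w)) (fun w => 𝓔 (aa w))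
     = 𝓔 (π^2/4) * WW (fun w => 𝓔 (aa w)) (fun w => 𝓔 (aa w)) (fun w => 𝓔 (aa w)) := by
    unfold WW
    rw [← lintegral_const_mul' _ _ ENNReal.ofReal_ne_top, ← lintegral_add_left, ← lintegral_add_left]
    · have a1 : ∀ᵐ k : ℂ, k ≠ 0 := by simp [ae_iff]
      have a2 : ∀ᵐ k : ℂ, k ≠ 1 := by simp [ae_iff]
      refine lintegral_congr_ae ?_
      filter_upwards [a1, a2] with z hz1 hz2
      have p1 : 0 < ‖z‖ := norm_pos_iff.2 hz1
      have p2 : 0 < ‖1-z‖ := norm_pos_iff.2 (sub_ne_zero.2 hz2.symm)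
      simp_rw [lintegral_const_mul' _ _ ENNReal.ofReal_ne_top]
      rw [← mul_add, ← mul_add, mul_left_comm, ← lintegral_const_mul' _ _ ENNReal.ofReal_ne_top,
        ← lintegral_add_left (by fun_prop), ← lintegral_add_left (by fun_prop)]
      congr 1
      have hsr := sum_rule 1 ‖z‖ ‖1-z‖ one_pos p1 p2
      refine Eq.trans ?_ (hsr.trans ?_)
      · refine setLIntegral_congr_fun measurableSet_Ioi fun R hR => ?_
        simp only [mem_Ioi] at hR
        have := aa_pos R
        have := aa_pos (R*‖z‖)
        have := aa_pos (R*‖1-z‖)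
        have := bb_nonneg R (by positivity)
        have := bb_nonneg (R*‖z‖) (by positivity)
        have := bb_nonneg (R*‖1-z‖) (by positivity)
        simp only [one_mul, mul_one, mul_comm _ R, mul_assoc]
        repeat rw [← ENNReal.ofReal_mul (by positivity)]
        repeat rw [← ENNReal.ofReal_add (by positivity) (by positivity)]
      · refine setLIntegral_congr_fun measurableSet_Ioi fun R hR => ?_
        simp only [mem_Ioi] at hR
        have := aa_pos R
        have := aa_pos (R*‖z‖)
        have := aa_pos (R*‖1-z‖)
        simp only [one_mul, mul_one, mul_comm _ R, mul_assoc]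
        repeat rw [← ENNReal.ofReal_mul (by positivity)]
    · refine Measurable.add ?_ ?_
      · exact Measurable.lintegral_prod_right' (f := fun p : ℂ × ℝ => 𝓔 (1/(‖p.1‖*‖1-p.1‖)) * (𝓔 (aa p.2) * 𝓔 (bb (p.2*‖p.1‖)) * 𝓔 (bb (p.2*‖1-p.1‖)))) (by fun_prop)
      · exact Measurable.lintegral_prod_right' (f := fun p : ℂ × ℝ => 𝓔 (1/(‖p.1‖*‖1-p.1‖)) * (𝓔 (bb p.2) * 𝓔 (aa (p.2*‖p.1‖)) * 𝓔 (bb (p.2*‖1-p.1‖)))) (by fun_prop)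
    · exact Measurable.lintegral_prod_right' (f := fun p : ℂ × ℝ => 𝓔 (1/(‖p.1‖*‖1-p.1‖)) * (𝓔 (aa p.2) * 𝓔 (bb (p.2*‖p.1‖)) * 𝓔 (bb (p.2*‖1-p.1‖)))) (by fun_prop)
  rw [WW_s2 _ _ _ meb meb mea, WW_s1 _ _ _ meb mea meb, ← IKM3] at h1
  set X := ∫⁻ t in Ioi (0:ℝ), 𝓔 (I0 t * K0 t^5 * t)
  have e1 : 𝓔 (2*π) * X + 𝓔 (2*π) * X + 𝓔 (2*π) * X = 𝓔 (6*π) * X := by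
    rw [← add_mul, ← add_mul, ← ENNReal.ofReal_add (by positivity) (by positivity),
      ← ENNReal.ofReal_add (by positivity) (by positivity)]
    congr 2; ring
  rw [e1] at h1
  have e2 : 𝓔 (π/4) * (𝓔 24 * X) = 𝓔 (π/4) * (𝓔 π * WW (fun w => 𝓔 (aa w)) (fun w => 𝓔 (aa w)) (fun w => 𝓔 (aa w))) := by
    rw [← mul_assoc, ← mul_assoc, ← ENNReal.ofReal_mul (by positivity), ← ENNReal.ofReal_mul (by positivity),
      show π/4*24 = 6*π by ring, show π/4*π = π^2/4 by ring]
    exact h1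
  exact (ENNReal.mul_right_inj (by simp [pi_pos]) ENNReal.ofReal_ne_top).1 e2

theorem tan_pos_of {ψ : ℝ} (h : ψ ∈ Ioo 0 (π/2)) : 0 < Real.tan ψ := Real.tan_pos_of_pos_of_lt_pi_div_two h.1 h.2

theorem psi_int (X Y : ℝ) (hX : 0 < X) (hY : 0 < Y) :
    ∫⁻ ψ in Ioo 0 (π/2), 𝓔 (1/(X * cos ψ^2 + Y * sin ψ^2)) = 𝓔 (π/(2*√(X*Y))) := by
  have hp := pi_pos
  have hm : ∀ c : ℝ, 0 < c → ∀ ψ ∈ Ioo 0 (π/2), arctan (c * tan ψ) ∈ Ioo 0 (π/2) := by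
    intro c hc ψ hψ
    have := tan_pos_of hψ
    exact ⟨Real.arctan_pos.2 (by positivity), Real.arctan_lt_pi_div_two _⟩
  have hinv : ∀ c d : ℝ, d * c = 1 → ∀ ψ ∈ Ioo 0 (π/2), arctan (d * tan (arctan (c * tan ψ))) = ψ := by
    intro c d hcd ψ hψ
    rw [Real.tan_arctan, ← mul_assoc, hcd, one_mul, Real.arctan_tan (by linarith [hψ.1]) hψ.2]
  have sX : 0 < √X := Real.sqrt_pos.2 hX
  have sY : 0 < √Y := Real.sqrt_pos.2 hY
  have hc : 0 < √Y/√X := by positivity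
  have hd : 0 < √X/√Y := by positivity
  have key : ∫⁻ ψ in Ioo 0 (π/2), 𝓔 (1/√(X*Y)) = ∫⁻ ψ in Ioo 0 (π/2), 𝓔 (1/(X * cos ψ^2 + Y * sin ψ^2)) := by
    refine subR (fun ψ => arctan (√Y/√X * tan ψ)) (fun ψ => 1/(1+(√Y/√X * tan ψ)^2) * (√Y/√X * (1/cos ψ^2)))
      (fun ψ => arctan (√X/√Y * tan ψ)) _ _ measurableSet_Ioo ?_ (hm _ hc) (hm _ hd)
      (hinv _ _ (by field_simp)) (hinv _ _ (by field_simp)) ?_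
    · intro ψ hψ
      have c0 : 0 < cos ψ := Real.cos_pos_of_mem_Ioo ⟨by linarith [hψ.1], hψ.2⟩
      exact ((Real.hasDerivAt_tan c0.ne').const_mul _).arctan
    · intro ψ hψ
      have c0 : 0 < cos ψ := Real.cos_pos_of_mem_Ioo ⟨by linarith [hψ.1], hψ.2⟩
      rw [abs_of_pos (by positivity), Real.tan_eq_sin_div_cos, Real.sqrt_mul hX.le]
      have e1 : √X^2 = X := Real.sq_sqrt hX.le
      have e2 : √Y^2 = Y := Real.sq_sqrt hY.le
      have : 0 < X * cos ψ^2 + Y * sin ψ^2 := by positivity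
      rw [← e1, ← e2] at this ⊢
      simp only [Real.sqrt_sq sX.le, Real.sqrt_sq sY.le]
      field_simp
  rw [← key]
  simp only [lintegral_const, MeasurableSet.univ, Measure.restrict_apply, univ_inter, Real.volume_Ioo]
  rw [← ENNReal.ofReal_mul (by positivity)]
  congr 1; field_simp; ring

theorem ang_int (U V : ℝ) (h1 : 0 < U - V) (h2 : 0 < U + V) :
    ∫⁻ θ in Ioo (-π) π, 𝓔 (1/(U - V * cos θ)) = 𝓔 (2*π/√(U^2 - V^2)) := by
  have hp := pi_pos
  have e : (∫⁻ θ in Ioo (-π) π, 𝓔 (1/(U - V * cos θ))) = 2 * ∫⁻ θ in Ioo 0 π, 𝓔 (1/(U - V * cos θ)) := by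
    have h := even_lint (fun θ => (Ioo (-π) π).indicator (fun θ => 1/(U - V * cos θ)) θ) (by
      intro x
      by_cases hx : x ∈ Ioo (-π) π
      · rw [indicator_of_mem hx, indicator_of_mem (by constructor <;> linarith [hx.1, hx.2]), Real.cos_neg]
      · rw [indicator_of_notMem hx, indicator_of_notMem (fun h => hx (by constructor <;> linarith [h.1, h.2]))])
    have h3 : ∀ θ, 𝓔 ((Ioo (-π) π).indicator (fun θ => 1/(U - V * cos θ)) θ) =
        (Ioo (-π) π).indicator (fun θ => 𝓔 (1/(U - V * cos θ))) θ := by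
      intro θ
      by_cases hx : θ ∈ Ioo (-π) π
      · rw [indicator_of_mem hx, indicator_of_mem hx]
      · rw [indicator_of_notMem hx, indicator_of_notMem hx, ENNReal.ofReal_zero]
    simp_rw [h3] at h
    rw [lintegral_indicator measurableSet_Ioo, lintegral_indicator measurableSet_Ioo,
      Measure.restrict_restrict measurableSet_Ioo] at h
    rw [h]
    congr 3
    ext x; simp only [mem_inter_iff, mem_Ioo, mem_Ioi]
    constructor
    · rintro ⟨h1, h2⟩; exact ⟨h2, h1.2⟩
    · rintro ⟨h1, h2⟩; exact ⟨⟨by linarith, h2⟩, h1⟩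
  have e2 : ∫⁻ θ in Ioo 0 π, 𝓔 (1/(U - V * cos θ)) =
      ∫⁻ ψ in Ioo 0 (π/2), 𝓔 (2 * (1/((U-V) * cos ψ^2 + (U+V) * sin ψ^2))) := by
    refine subR (fun ψ => 2*ψ) (fun _ => 2) (fun θ => θ/2) _ _ measurableSet_Ioo ?_ ?_ ?_ ?_ ?_ ?_
    · intro x _; simpa using (hasDerivAt_id x).const_mul 2
    · intro x hx; constructor <;> linarith [hx.1, hx.2]
    · intro x hx; constructor <;> linarith [hx.1, hx.2]
    · intro x _; ring
    · intro x _; ring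
    · intro x _
      rw [abs_two, Real.cos_two_mul]
      congr 2
      rw [Real.sin_sq]; ring
  rw [e, e2]
  simp_rw [ENNReal.ofReal_mul (zero_le_two (α := ℝ))]
  rw [lintegral_const_mul' _ _ ENNReal.ofReal_ne_top, psi_int _ _ h1 h2, ENNReal.ofReal_ofNat,
    ← mul_assoc, show (2:ENNReal)*2 = 𝓔 4 by rw [ENNReal.ofReal_ofNat]; norm_num, ← ENNReal.ofReal_mul (by norm_num)]
  congr 1
  rw [show (U-V)*(U+V) = U^2-V^2 by ring]
  field_simp; ring

theorem L9 (A B : ℝ) (hA : 0 < A) (hB : 0 < B) :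
    𝓔 (1/(A*B)) * ∫⁻ R in Ioi (0:ℝ), 𝓔 (aa R) * 𝓔 (aa (R*A)) * 𝓔 (aa (R*B)) =
    𝓔 (1/π) * ∫⁻ e in Ioo (0:ℝ) 1, ∫⁻ ψ in Ioo 0 (π/2),
      𝓔 (1/√e) * 𝓔 (1/(e*A^2*B^2 + (1-e)*(B^2*cos ψ^2 + A^2 * sin ψ^2))) := by
  have hp := pi_pos
  have e1 : ∫⁻ R in Ioi (0:ℝ), 𝓔 (aa R) * 𝓔 (aa (R*A)) * 𝓔 (aa (R*B)) =
     ∫⁻ R in Ioi (0:ℝ), 𝓔 (1/√((1+R^2)*((1+(R*A)^2)*(1+(R*B)^2)))) := by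
    refine lintegral_congr fun R => ?_
    have := aa_pos R
    have := aa_pos (R*A)
    have := aa_pos (R*B)
    rw [← ENNReal.ofReal_mul (by positivity), ← ENNReal.ofReal_mul (by positivity)]
    congr 1; unfold aa
    rw [Real.sqrt_mul (by positivity), Real.sqrt_mul (by positivity)]
    field_simp
  have e2 : ∫⁻ R in Ioi (0:ℝ), 𝓔 (1/√((1+R^2)*((1+(R*A)^2)*(1+(R*B)^2)))) =
     ∫⁻ e in Ioo (0:ℝ) 1, 𝓔 (1/(2*√e*√(((1-e)+e*A^2)*((1-e)+e*B^2)))) := by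
    refine subR (fun e => √(e/(1-e))) (fun e => 1/(1-e)^2 / (2*√(e/(1-e)))) (fun R => R^2/(1+R^2)) _ _
      measurableSet_Ioo ?_ ?_ ?_ ?_ ?_ ?_
    · intro e he
      have h1 : 0 < 1 - e := by linarith [he.2]
      have h0 := he.1
      refine HasDerivAt.sqrt ?_ (by positivity)
      refine HasDerivAt.congr_deriv ((hasDerivAt_id e).div ((hasDerivAt_id e).const_sub 1) h1.ne') ?_
      simp only [id]; field_simp; ring
    · intro e he
      have h1 : 0 < 1 - e := by linarith [he.2]
      have h0 := he.1
      simp only [mem_Ioi]; positivity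
    · intro R hR
      simp only [mem_Ioi] at hR
      refine ⟨by positivity, ?_⟩
      rw [div_lt_one (by positivity)]; linarith
    · intro e he
      have h1 : 0 < 1 - e := by linarith [he.2]
      have h0 := he.1
      rw [Real.sq_sqrt (by positivity)]; field_simp; ring
    · intro R hR
      simp only [mem_Ioi] at hR
      have : R^2/(1+R^2)/(1-R^2/(1+R^2)) = R^2 := by
        rw [show 1-R^2/(1+R^2) = 1/(1+R^2) by field_simp; ring]; field_simp
      rw [this, Real.sqrt_sq hR.le]
    · intro e he
      have h1 : 0 < 1 - e := by linarith [he.2]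
      have h0 := he.1
      rw [abs_of_pos (by positivity), mul_pow, mul_pow, Real.sq_sqrt (by positivity)]
      have k1 : (1+e/(1-e))*((1+e/(1-e)*A^2)*(1+e/(1-e)*B^2)) = (1/(1-e)^3) * (((1-e)+e*A^2)*((1-e)+e*B^2)) := by
        field_simp; ring
      have k2 : √(1/(1-e)^3) * √(e/(1-e)) = √e/(1-e)^2 := by
        rw [← Real.sqrt_mul (by positivity), show 1/(1-e)^3*(e/(1-e)) = e/((1-e)^2)^2 by field_simp,
          Real.sqrt_div h0.le, Real.sqrt_sq (by positivity)]
      rw [k1, Real.sqrt_mul (by positivity)]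
      have q : 0 < √(((1-e)+e*A^2)*((1-e)+e*B^2)) := by positivity
      set T := √(((1-e)+e*A^2)*((1-e)+e*B^2))
      have q2 : 0 < √(1/(1-e)^3) := by positivity
      have q3 : 0 < √(e/(1-e)) := by positivity
      have q4 : 0 < √e := by positivity
      calc _ = 1/((1-e)^2 * (√(1/(1-e)^3) * √(e/(1-e))) * (2*T)) := by
            field_simp
        _ = _ := by rw [k2]; field_simp
  rw [e1, e2, ← lintegral_const_mul' _ _ ENNReal.ofReal_ne_top, ← lintegral_const_mul' _ _ ENNReal.ofReal_ne_top]
  refine setLIntegral_congr_fun measurableSet_Ioo fun e he => ?_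
  have h1 : 0 < 1 - e := by linarith [he.2]
  have h0 := he.1
  rw [lintegral_const_mul' _ _ ENNReal.ofReal_ne_top]
  have e3 := psi_int (B^2*((1-e)+e*A^2)) (A^2*((1-e)+e*B^2)) (by positivity) (by positivity)
  have e4 : (∫⁻ ψ in Ioo 0 (π/2), 𝓔 (1/(e*A^2*B^2 + (1-e)*(B^2*cos ψ^2 + A^2 * sin ψ^2)))) =
    ∫⁻ ψ in Ioo 0 (π/2), 𝓔 (1/((B^2*((1-e)+e*A^2)) * cos ψ^2 + (A^2*((1-e)+e*B^2)) * sin ψ^2)) := by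
    refine lintegral_congr fun ψ => ?_
    congr 2
    rw [Real.cos_sq' ψ]; ring
  rw [e4, e3, ← ENNReal.ofReal_mul (by positivity), ← ENNReal.ofReal_mul (by positivity), ← ENNReal.ofReal_mul (by positivity)]
  congr 1
  rw [show B^2*((1-e)+e*A^2) * (A^2*((1-e)+e*B^2)) = (A*B)^2 * (((1-e)+e*A^2)*((1-e)+e*B^2)) by ring,
    Real.sqrt_mul (x := (A*B)^2) (by positivity), Real.sqrt_sq (by positivity)]
  field_simp

def QQ (x1 x3 r : ℝ) : ℝ := (x1 + r + x3*r^2)^2 - 4*r*(x1+x3*r)^2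

theorem L10a (x1 x2 x3 : ℝ) (h1 : 0 < x1) (h2 : 0 < x2) (h3 : 0 < x3) (hs : x1 + x2 + x3 = 1) :
    ∫⁻ z : ℂ, 𝓔 (1/(x3*‖z‖^2*‖1-z‖^2 + (x1*‖1-z‖^2 + x2*‖z‖^2))) =
    𝓔 π * ∫⁻ r in Ioi (0:ℝ), 𝓔 (1/√(QQ x1 x3 r)) := by
  have hp := pi_pos
  rw [lint_polar _ (by fun_prop)]
  have e1 : ∀ r ∈ Ioi (0:ℝ), (∫⁻ θ in Ioo (-π) π, 𝓔 r * 𝓔 (1/(x3*‖(r:ℂ) * (cos θ + sin θ * Complex.I)‖^2*‖1-(r:ℂ) * (cos θ + sin θ * Complex.I)‖^2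
     + (x1*‖1-(r:ℂ) * (cos θ + sin θ * Complex.I)‖^2 + x2*‖(r:ℂ) * (cos θ + sin θ * Complex.I)‖^2)))) =
      𝓔 π * 𝓔 (2*r * (1/√(QQ x1 x3 (r^2)))) := by
    intro r hr
    simp only [mem_Ioi] at hr
    rw [lintegral_const_mul' _ _ ENNReal.ofReal_ne_top]
    have n1 : ∀ θ : ℝ, ‖(r:ℂ) * (cos θ + sin θ * Complex.I)‖^2 = r^2 := by
      intro θ
      rw [← Complex.normSq_eq_norm_sq, Complex.normSq_apply]
      simp [-Complex.ofReal_cos, -Complex.ofReal_sin]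
      nlinarith [Real.sin_sq_add_cos_sq θ]
    have n2 : ∀ θ : ℝ, ‖1 - (r:ℂ) * (cos θ + sin θ * Complex.I)‖^2 = 1 + r^2 - 2*r*cos θ := by
      intro θ
      rw [← Complex.normSq_eq_norm_sq, Complex.normSq_apply]
      simp [-Complex.ofReal_cos, -Complex.ofReal_sin]
      nlinarith [Real.sin_sq_add_cos_sq θ]
    have := ang_int (x1 + r^2 + x3*(r^2)^2) (2*r*(x1+x3*r^2)) (by
      have : x1 + r^2 + x3*(r^2)^2 - 2*r*(x1+x3*r^2) = x1*(1-r)^2+x2*r^2+x3*r^2*(1-r)^2 := by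
        rw [show x2 = 1 - x1 - x3 by linarith]; ring
      rw [this]; positivity) (by positivity)
    have e : ∀ θ : ℝ, 1/(x3*‖(r:ℂ) * (cos θ + sin θ * Complex.I)‖^2*‖1-(r:ℂ) * (cos θ + sin θ * Complex.I)‖^2
     + (x1*‖1-(r:ℂ) * (cos θ + sin θ * Complex.I)‖^2 + x2*‖(r:ℂ) * (cos θ + sin θ * Complex.I)‖^2)) =
       1/((x1 + r^2 + x3*(r^2)^2) - (2*r*(x1+x3*r^2)) * cos θ) := by
      intro θ
      rw [n1, n2, show x2 = 1 - x1 - x3 by linarith]; congr 1; ring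
    simp_rw [e]
    rw [this, ← ENNReal.ofReal_mul hr.le, ← ENNReal.ofReal_mul hp.le]
    congr 1
    unfold QQ
    rw [show (2*r*(x1+x3*r^2))^2 = 4*r^2*(x1+x3*r^2)^2 by ring]
    ring
  rw [setLIntegral_congr_fun measurableSet_Ioi e1, lintegral_const_mul' _ _ ENNReal.ofReal_ne_top]
  congr 1
  symm
  refine subR (fun r => r^2) (fun r => 2*r) (fun r => √r) _ _ measurableSet_Ioi ?_ ?_ ?_ ?_ ?_ ?_
  · intro r _; simpa using hasDerivAt_pow 2 r
  · intro r hr; simp only [mem_Ioi] at *; positivity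
  · intro r hr; simp only [mem_Ioi] at *; positivity
  · intro r hr; simp only [mem_Ioi] at *; exact Real.sqrt_sq hr.le
  · intro r hr; simp only [mem_Ioi] at *; exact Real.sq_sqrt hr.le
  · intro r hr; simp only [mem_Ioi] at *; rw [abs_of_pos (by positivity)]

noncomputable def II (p : ℝ) : ENNReal := ∫⁻ N in Ioi (0:ℝ), 𝓔 (1/√(N^2*(N+1)^2+4*p*N))

theorem L10b (x1 x2 x3 : ℝ) (h1 : 0 < x1) (h2 : 0 < x2) (h3 : 0 < x3) (hs : x1 + x2 + x3 = 1) :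
    ∫⁻ r in Ioi (0:ℝ), 𝓔 (1/√(QQ x1 x3 r)) = II (x1*x2*x3) := by
  have hx2 : x2 = 1 - x1 - x3 := by linarith
  symm
  set h : ℝ → ℝ := fun r => x3*r^2+(1-2*x3)*r-x1 with hh
  have hQ : ∀ r, QQ x1 x3 r = h r^2 + 4*x2*r*(x1+x3*r) := by
    intro r; simp only [hh, QQ, hx2]; ring
  have hQp : ∀ r, 0 < r → 0 < QQ x1 x3 r := by intro r hr; rw [hQ]; positivity
  have hsum : ∀ r, 0 < r → 0 < h r + √(QQ x1 x3 r) := by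
    intro r hr
    have : |h r| < √(QQ x1 x3 r) := by
      apply Real.lt_sqrt_of_sq_lt
      rw [sq_abs, hQ]
      have : 0 < 4*x2*r*(x1+x3*r) := by positivity
      linarith
    have := neg_abs_le (h r)
    linarith
  -- facts about N(r)
  have facts : ∀ r, 0 < r → ∀ N, N = 2*x1*x2/(h r + √(QQ x1 x3 r)) →
      0 < N ∧ √(QQ x1 x3 r) = 2*x1*x2/N - h r ∧ x1^2*x2 - x1*h r*N = N^2*r*(x1+x3*r) ∧
      √(N^2*(N+1)^2+4*(x1*x2*x3)*N) = 2*r*x3*N*(N+x1)/x1 + N*(N+1-2*x3) := by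
    intro r hr N hN
    have p := hsum r hr
    have N0 : 0 < N := by rw [hN]; positivity
    have e1 : √(QQ x1 x3 r) = 2*x1*x2/N - h r := by
      rw [hN]; field_simp; ring
    have e2 : x1^2*x2 - x1*h r*N = N^2*r*(x1+x3*r) := by
      have := Real.sq_sqrt (hQp r hr).le
      rw [e1, hQ] at this
      have t2 : (2*x1*x2/N - h r)^2 * N^2 = (2*x1*x2 - h r * N)^2 := by field_simp
      have t3 : (2*x1*x2 - h r * N)^2 = (h r^2 + 4*x2*r*(x1+x3*r)) * N^2 := by rw [← t2, this]
      have t4 : 4*x2*(x1^2*x2 - x1*h r*N) = 4*x2*(N^2*r*(x1+x3*r)) := by linear_combination t3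
      exact mul_left_cancel₀ (by positivity) t4
    refine ⟨N0, e1, e2, ?_⟩
    have e2' : x1^2*x2 + x1^2*N = r * (x3*N*(N+x1) * r + x1*N*(N+1-2*x3)) := by
      simp only [hh] at e2; linear_combination e2
    have e3 : 0 < x3*N*(N+x1)*r + x1*N*(N+1-2*x3) := by
      by_contra hc
      have : r * (x3*N*(N+x1) * r + x1*N*(N+1-2*x3)) ≤ 0 := mul_nonpos_of_nonneg_of_nonpos hr.le (not_lt.1 hc)
      have : 0 < x1^2*x2 + x1^2*N := by positivity
      linarith
    have e4 : 2*r*x3*N*(N+x1)/x1 + N*(N+1-2*x3) = (x3*N*(N+x1)*r + (x3*N*(N+x1)*r + x1*N*(N+1-2*x3)))/x1 := by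
      field_simp; ring
    rw [e4]
    rw [Real.sqrt_eq_iff_mul_self_eq_of_pos (by positivity)]
    rw [div_mul_div_comm, div_eq_iff (by positivity)]
    rw [hx2] at e2' ⊢
    linear_combination (-4*x3*N*(N+x1))*e2'
  have der : ∀ r, 0 < r → HasDerivAt (fun r => 2*x1*x2/(h r + √(QQ x1 x3 r)))
     (-(√((2*x1*x2/(h r + √(QQ x1 x3 r)))^2*((2*x1*x2/(h r + √(QQ x1 x3 r)))+1)^2+4*(x1*x2*x3)*(2*x1*x2/(h r + √(QQ x1 x3 r))))/√(QQ x1 x3 r))) r := by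
    intro r hr
    obtain ⟨N0, e1, e2, e3⟩ := facts r hr _ rfl
    have dh : HasDerivAt h (2*x3*r+1-2*x3) r := by
      refine HasDerivAt.congr_deriv (((((hasDerivAt_id r).pow 2).const_mul x3).add ((hasDerivAt_id r).const_mul (1-2*x3))).sub_const x1) ?_
      simp; ring
    have dQ : HasDerivAt (QQ x1 x3) (2*h r*(2*x3*r+1-2*x3) + 4*x2*(x1+2*x3*r)) r := by
      have : QQ x1 x3 = fun r => h r^2 + 4*x2*r*(x1+x3*r) := funext hQ
      rw [this]
      refine HasDerivAt.congr_deriv ((dh.pow 2).add (((hasDerivAt_id r).const_mul (4*x2)).mul (((hasDerivAt_id r).const_mul x3).const_add x1))) ?_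
      simp; ring
    have ds := dh.add (dQ.sqrt (hQp r hr).ne')
    refine HasDerivAt.congr_deriv ((hasDerivAt_const r (2*x1*x2)).div ds (hsum r hr).ne') ?_
    rw [e3]
    have S0 : 0 < √(QQ x1 x3 r) := Real.sqrt_pos.2 (hQp r hr)
    have p := hsum r hr
    set N := 2*x1*x2/(h r + √(QQ x1 x3 r)) with hN
    have hp : h r + √(QQ x1 x3 r) = 2*x1*x2/N := by rw [hN]; field_simp
    rw [hp]
    set S := √(QQ x1 x3 r)
    clear_value N
    field_simp
    have hS : S * N = 2*x1*x2 - h r * N := by rw [e1]; field_simp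
    rw [e1]; field_simp
    ring
  refine subR (fun r => 2*x1*x2/(h r + √(QQ x1 x3 r))) _
    (fun N => x1*(-(N*(N+1-2*x3)) + √(N^2*(N+1)^2+4*(x1*x2*x3)*N))/(2*x3*N*(N+x1))) _ _ measurableSet_Ioi
    (fun r hr => der r hr) ?_ ?_ ?_ ?_ ?_
  · intro r hr; exact (facts r hr _ rfl).1
  · intro N hN
    simp only [mem_Ioi] at *
    have : |N*(N+1-2*x3)| < √(N^2*(N+1)^2+4*(x1*x2*x3)*N) := by
      apply Real.lt_sqrt_of_sq_lt
      rw [sq_abs]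
      have : N^2*(N+1)^2+4*(x1*x2*x3)*N = (N*(N+1-2*x3))^2 + 4*x3*N*(N+x1)*(N+x2) := by rw [hx2]; ring
      rw [this]
      have : 0 < 4*x3*N*(N+x1)*(N+x2) := by positivity
      linarith
    have := le_abs_self (N*(N+1-2*x3))
    have : 0 < -(N*(N+1-2*x3)) + √(N^2*(N+1)^2+4*(x1*x2*x3)*N) := by linarith
    positivity
  · intro r hr
    simp only [mem_Ioi] at hr
    obtain ⟨N0, e1, e2, e3⟩ := facts r hr _ rfl
    rw [e3]
    set N := 2*x1*x2/(h r + √(QQ x1 x3 r)) with hN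
    clear_value N
    field_simp; ring
  · intro N hN
    simp only [mem_Ioi] at hN
    have q : |N*(N+1-2*x3)| < √(N^2*(N+1)^2+4*(x1*x2*x3)*N) := by
      apply Real.lt_sqrt_of_sq_lt
      rw [sq_abs]
      have : N^2*(N+1)^2+4*(x1*x2*x3)*N = (N*(N+1-2*x3))^2 + 4*x3*N*(N+x1)*(N+x2) := by rw [hx2]; ring
      rw [this]
      have : 0 < 4*x3*N*(N+x1)*(N+x2) := by positivity
      linarith
    have := le_abs_self (N*(N+1-2*x3))
    have hD := Real.sq_sqrt (show 0 ≤ N^2*(N+1)^2+4*(x1*x2*x3)*N by positivity)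
    set D := √(N^2*(N+1)^2+4*(x1*x2*x3)*N) with hDd
    have q2 : 0 < -(N*(N+1-2*x3)) + D := by linarith
    set r := x1*(-(N*(N+1-2*x3)) + D)/(2*x3*N*(N+x1)) with hr
    have r0 : 0 < r := by positivity
    have hDr : D = 2*x3*N*(N+x1)*r/x1 + N*(N+1-2*x3) := by rw [hr]; field_simp; ring
    have e2' : x1^2*x2 + x1^2*N = r * (x3*N*(N+x1) * r + x1*N*(N+1-2*x3)) := by
      rw [hDr, hx2] at hD
      clear_value r
      field_simp at hD
      have : 4*x3*(N+x1)*(x1^2*x2 + x1^2*N) = 4*x3*(N+x1)*(r * (x3*N*(N+x1) * r + x1*N*(N+1-2*x3))) := by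
        rw [hx2]
        linear_combination (-1)*hD
      exact mul_left_cancel₀ (by positivity) this
    have e2 : x1^2*x2 - x1*h r*N = N^2*r*(x1+x3*r) := by
      simp only [hh]; linear_combination e2'
    have hle : 0 ≤ 2*x1*x2 - h r * N := by
      have : 0 < N^2*r*(x1+x3*r) := by positivity
      have t : 0 < x1*(x1*x2 - h r * N) := by nlinarith
      have := (mul_pos_iff_of_pos_left h1).1 t
      have : 0 < x1*x2 := by positivity
      linarith
    have hsq : √(QQ x1 x3 r) = (2*x1*x2 - h r * N)/N := by
      rw [show QQ x1 x3 r = ((2*x1*x2 - h r * N)/N)^2 by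
        rw [hQ]; field_simp; linear_combination (-4*x2)*e2]
      exact Real.sqrt_sq (by positivity)
    rw [hsq]; field_simp; ring
  · intro r hr
    simp only [mem_Ioi] at hr
    obtain ⟨N0, e1, e2, e3⟩ := facts r hr _ rfl
    have S0 : 0 < √(QQ x1 x3 r) := Real.sqrt_pos.2 (hQp r hr)
    set N := 2*x1*x2/(h r + √(QQ x1 x3 r)) with hN
    have D0 : 0 < √(N^2*(N+1)^2+4*(x1*x2*x3)*N) := by positivity
    rw [abs_neg, abs_of_pos (by positivity)]
    field_simp

noncomputable def cc : ℕ → ℝ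
  | 0 => 1
  | n+1 => cc n * ((n + 1/2) / (n+1))

noncomputable def FK : ℕ → ℝ
  | 0 => 1
  | n+1 => FK n * ((n + 1/3) * (n + 2/3) / (n+1)^2)

theorem cc_pos (n : ℕ) : 0 < cc n := by
  induction n with
  | zero => simp [cc]
  | succ n ih => rw [cc]; positivity

theorem FK_pos (n : ℕ) : 0 < FK n := by
  induction n with
  | zero => simp [FK]
  | succ n ih => rw [FK]; positivity

theorem FK_le (n : ℕ) : FK n ≤ 1/(n+1) := by
  induction n with
  | zero => simp [FK]
  | succ n ih =>
    rw [FK]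
    refine (mul_le_mul_of_nonneg_right ih (by positivity)).trans ?_
    push_cast
    rw [div_mul_div_comm, div_le_div_iff₀ (by positivity) (by positivity)]
    have : (0:ℝ) ≤ n := n.cast_nonneg
    nlinarith [mul_nonneg this this, mul_nonneg this (mul_nonneg this this)]

theorem cc_choose (n : ℕ) : Ring.choose ((1/2:ℝ) + n - 1) n = cc n := by
  have key : ∀ n : ℕ, (descPochhammer ℤ n).smeval ((1/2:ℝ) + n - 1) = n.factorial * cc n := by
    intro n
    rw [Polynomial.descPochhammer_smeval_eq_ascPochhammer, show (1/2:ℝ) + n - 1 - n + 1 = 1/2 by ring,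
      Polynomial.ascPochhammer_smeval_eq_eval]
    induction n with
    | zero => simp [cc]
    | succ n ih =>
      rw [ascPochhammer_succ_eval, ih, cc, Nat.factorial_succ]
      push_cast
      field_simp
      ring
  have h := Ring.choose_eq_smul (a := (1/2:ℝ) + n - 1) (n := n)
  rw [h, key]
  have : (n.factorial : ℝ) ≠ 0 := by positivity
  simp [this]

theorem cc_sum (x : ℝ) (h0 : 0 ≤ x) (h1 : x < 1) : HasSum (fun n => cc n * x^n) (1/√(1-x)) := by
  have h := (Real.one_div_one_sub_rpow_hasFPowerSeriesOnBall_zero (1/2)).hasSum (y := x) (by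
    rw [Metric.mem_eball, edist_zero_right, ← ofReal_norm, Real.norm_eq_abs, abs_of_nonneg h0]
    simpa using h1)
  simp only [zero_add, FormalMultilinearSeries.ofScalars_apply_eq, cc_choose, smul_eq_mul] at h
  rw [Real.sqrt_eq_rpow]; exact h

theorem ch3 (α : ℝ) : Real.cosh (3*α) = Real.cosh α * (1 + 4 * Real.sinh α^2) := by
  rw [Real.cosh_three_mul, Real.sinh_sq]; ring

theorem sh3 (α : ℝ) : Real.sinh (3*α) = Real.sinh α * (3 + 4 * Real.sinh α^2) := by
  rw [Real.sinh_three_mul]; ring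

theorem sinh_sq_ge (α : ℝ) : α^2 ≤ Real.sinh α^2 := by
  rcases le_total 0 α with h | h
  · have := Real.self_le_sinh_iff.2 h
    exact pow_le_pow_left₀ h this 2
  · have := Real.sinh_le_self_iff.2 h
    nlinarith

theorem LL_bd (n : ℕ) (α : ℝ) : Real.cosh α / Real.cosh (3*α)^(n+1) ≤ (1+α^2)⁻¹ := by
  have h1 := Real.one_le_cosh (3*α)
  have h2 := Real.cosh_pos α
  have h3 := sinh_sq_ge α
  calc _ ≤ Real.cosh α / Real.cosh (3*α)^1 := by 
          apply div_le_div_of_nonneg_left h2.le (by positivity)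
          exact pow_le_pow_right₀ h1 (by omega)
    _ = (1 + 4 * Real.sinh α^2)⁻¹ := by rw [ch3]; field_simp
    _ ≤ _ := by gcongr; nlinarith [sq_nonneg α]

theorem LL_int (n : ℕ) : Integrable (fun α => Real.cosh α / Real.cosh (3*α)^(n+1)) := by
  refine integrable_inv_one_add_sq.mono' ?_ (Filter.Eventually.of_forall fun α => ?_)
  · have : ∀ α : ℝ, Real.cosh (3*α)^(n+1) ≠ 0 := fun α => (pow_pos (Real.cosh_pos _) _).ne'
    exact Continuous.aestronglyMeasurable (by fun_prop (disch := assumption))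
  · have h2 := Real.cosh_pos α
    have h3 := Real.cosh_pos (3*α)
    rw [Real.norm_eq_abs, abs_of_pos (by positivity)]
    exact LL_bd n α

theorem inv_sq_tend : Filter.Tendsto (fun α : ℝ => (1+α^2)⁻¹) Filter.atTop (nhds 0) := by
  apply Filter.Tendsto.inv_tendsto_atTop
  exact Filter.tendsto_atTop_add_const_left _ _ (Filter.tendsto_pow_atTop two_ne_zero)

theorem LL_rec (n : ℕ) : (9*((n:ℝ)+1)^2 - 1) * (∫ α in Ioi (0:ℝ), Real.cosh α / Real.cosh (3*α)^(n+1)) =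
    9 * (n+1) * (n+2) * ∫ α in Ioi (0:ℝ), Real.cosh α / Real.cosh (3*α)^(n+3) := by
  have d : ∀ α ∈ Ici (0:ℝ), HasDerivAt (fun α => Real.sinh α / Real.cosh (3*α)^(n+1) +
      3*(n+1) * Real.cosh α * Real.sinh (3*α) / Real.cosh (3*α)^(n+2))
      ((1 - 9*((n:ℝ)+1)^2) * (Real.cosh α / Real.cosh (3*α)^(n+1)) +
       9 * (n+1) * (n+2) * (Real.cosh α / Real.cosh (3*α)^(n+3))) α := by
    intro α _
    have h3 := Real.cosh_pos (3*α)
    have l : HasDerivAt (fun α : ℝ => 3*α) 3 α := by simpa using (hasDerivAt_id α).const_mul (3:ℝ)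
    have dc := l.cosh
    have ds := l.sinh
    refine HasDerivAt.congr_deriv (((Real.hasDerivAt_sinh α).div (dc.pow (n+1)) (pow_pos h3 _).ne').add
      ((((Real.hasDerivAt_cosh α).const_mul (3*((n:ℝ)+1))).mul ds).div (dc.pow (n+2)) (pow_pos h3 _).ne')) ?_
    have e : Real.sinh (3*α)^2 = Real.cosh (3*α)^2 - 1 := Real.sinh_sq _
    simp only [Pi.pow_apply, Pi.mul_apply, Nat.add_sub_cancel, show n + 2 - 1 = n+1 from rfl]
    push_cast
    set S := Real.sinh (3*α)
    set C := Real.cosh (3*α)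
    field_simp
    ring_nf
    simp only [e]
    ring
  have i1 := (LL_int n).integrableOn (s := Ioi (0:ℝ))
  have i3 := (LL_int (n+2)).integrableOn (s := Ioi (0:ℝ))
  have t : Filter.Tendsto (fun α => Real.sinh α / Real.cosh (3*α)^(n+1) +
      3*(n+1) * Real.cosh α * Real.sinh (3*α) / Real.cosh (3*α)^(n+2)) Filter.atTop (nhds 0) := by
    refine squeeze_zero_norm' (a := fun α => (1 + 3*((n:ℝ)+1)) * (1+α^2)⁻¹) ?_ (by simpa using inv_sq_tend.const_mul (1 + 3*((n:ℝ)+1)))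
    filter_upwards [Filter.eventually_ge_atTop (0:ℝ)] with α hα
    have h3 := Real.cosh_pos (3*α)
    have h2 := Real.cosh_pos α
    have s1 : 0 ≤ Real.sinh α := Real.sinh_nonneg_iff.2 hα
    have s3 : 0 ≤ Real.sinh (3*α) := Real.sinh_nonneg_iff.2 (by positivity)
    rw [Real.norm_eq_abs, abs_of_nonneg (by positivity)]
    have b := LL_bd n α
    calc _ ≤ Real.cosh α / Real.cosh (3*α)^(n+1) + 3*(n+1) * Real.cosh α * Real.cosh (3*α) / Real.cosh (3*α)^(n+2) := by
          gcongr
          · exact (Real.sinh_lt_cosh α).le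
          · exact (Real.sinh_lt_cosh _).le
      _ = (1 + 3*((n:ℝ)+1)) * (Real.cosh α / Real.cosh (3*α)^(n+1)) := by field_simp; ring
      _ ≤ _ := by gcongr
  have h := integral_Ioi_of_hasDerivAt_of_tendsto' d ((i1.const_mul _).add (i3.const_mul _)) t
  rw [integral_add (i1.const_mul _) (i3.const_mul _), integral_const_mul, integral_const_mul] at h
  simp at h
  linarith

theorem tanh_lim : Filter.Tendsto Real.tanh Filter.atTop (nhds 1) := by
  have : ∀ x : ℝ, Real.tanh x = (1 - Real.exp (-(2*x)))/(1 + Real.exp (-(2*x))) := by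
    intro x
    rw [Real.tanh_eq_sinh_div_cosh, Real.sinh_eq, Real.cosh_eq]
    have : Real.exp (-(2*x)) = Real.exp (-x) / Real.exp x := by rw [← Real.exp_sub]; congr 1; ring
    rw [this]
    have := Real.exp_pos x
    have := Real.exp_pos (-x)
    field_simp
  have e : Filter.Tendsto (fun x : ℝ => Real.exp (-(2*x))) Filter.atTop (nhds 0) := by
    apply Real.tendsto_exp_neg_atTop_nhds_zero.comp
    exact Filter.tendsto_id.const_mul_atTop (by norm_num)
  have h := ((tendsto_const_nhds (x := (1:ℝ))).sub e).div ((tendsto_const_nhds (x := (1:ℝ))).add e) (by norm_num)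
  simp only [sub_zero, add_zero, div_one] at h
  exact h.congr fun x => (this x).symm

theorem tanh_der (x : ℝ) : HasDerivAt Real.tanh (1/Real.cosh x^2) x := by
  have : Real.tanh = fun x => Real.sinh x / Real.cosh x := funext Real.tanh_eq_sinh_div_cosh
  rw [this]
  refine HasDerivAt.congr_deriv ((Real.hasDerivAt_sinh x).div (Real.hasDerivAt_cosh x) (Real.cosh_pos x).ne') ?_
  have := Real.cosh_sq x
  have h := Real.cosh_pos x
  congr 1
  nlinarith

theorem LL_zero : ∫ α in Ioi (0:ℝ), Real.cosh α / Real.cosh (3*α)^(0+1) = π/(3*√3) := by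
  have d : ∀ α ∈ Ici (0:ℝ), HasDerivAt (fun α => 1/√3 * arctan (√3 * Real.tanh α)) (Real.cosh α / Real.cosh (3*α)^(0+1)) α := by
    intro α _
    refine HasDerivAt.congr_deriv ((((tanh_der α).const_mul (√3)).arctan).const_mul (1/√3)) ?_
    have h := Real.cosh_pos α
    rw [ch3, Real.tanh_eq_sinh_div_cosh]
    have e : √3^2 = 3 := Real.sq_sqrt (by norm_num)
    have c := Real.cosh_sq α
    rw [mul_pow, e]
    field_simp
    rw [c]; ring
  have t : Filter.Tendsto (fun α => 1/√3 * arctan (√3 * Real.tanh α)) Filter.atTop (nhds (1/√3 * arctan (√3 * 1))) :=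
    (((Real.continuous_arctan.tendsto _).comp (tanh_lim.const_mul _))).const_mul _
  have h := integral_Ioi_of_hasDerivAt_of_tendsto' d (LL_int 0).integrableOn t
  rw [h, mul_one, Real.arctan_sqrt_three]
  simp; field_simp

theorem LL_val (k : ℕ) : 6 * cc k * ∫ α in Ioi (0:ℝ), Real.cosh α / Real.cosh (3*α)^(2*k+1) = 2*π/√3 * FK k := by
  induction k with
  | zero =>
    have := LL_zero
    simp only [mul_zero]; rw [this, cc, FK]; field_simp; norm_num
  | succ k ih =>
    have h := LL_rec (2*k)
    rw [cc, FK]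
    rw [show 2*(k+1)+1 = 2*k+3 by ring]
    push_cast at h
    set X := ∫ α in Ioi (0:ℝ), Real.cosh α / Real.cosh (3*α)^(2*k+1)
    set Y := ∫ α in Ioi (0:ℝ), Real.cosh α / Real.cosh (3*α)^(2*k+3)
    have e : Y = (9*(2*(k:ℝ)+1)^2 - 1) * X / (9 * (2*k+1)*(2*k+2)) := by
      rw [h]; field_simp
    rw [e, ← mul_assoc (2*π/√3), ← ih]; field_simp; ring

theorem LL_lint (k : ℕ) (δ : ℝ) (hδ : 0 ≤ δ) : ∫⁻ α in Ioi (0:ℝ), 𝓔 (6 * cc k * δ^k * (Real.cosh α / Real.cosh (3*α)^(2*k+1)))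
    = 𝓔 (2*π/√3) * 𝓔 (FK k * δ^k) := by
  have := cc_pos k
  have := FK_pos k
  rw [← ofReal_integral_eq_lintegral_ofReal ((LL_int (2*k)).integrableOn.const_mul _), integral_const_mul,
    ← ENNReal.ofReal_mul (by positivity)]
  · congr 1
    linear_combination δ^k * LL_val k
  · refine Filter.Eventually.of_forall fun α => ?_
    have h2 := Real.cosh_pos α
    have h3 := Real.cosh_pos (3*α)
    simp only [Pi.zero_apply]
    positivity

noncomputable def FE (x : ℝ) : ENNReal := ∑' k, 𝓔 (FK k * x^k)

theorem FE_int (δ : ℝ) (h0 : 0 ≤ δ) (h1 : δ < 1) :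
    ∫⁻ α in Ioi (0:ℝ), 𝓔 (6 * Real.cosh α / √(Real.cosh (3*α)^2 - δ)) = 𝓔 (2*π/√3) * FE δ := by
  unfold FE
  rw [← ENNReal.tsum_mul_left]
  simp_rw [← LL_lint _ δ h0]
  have hc : ∀ k : ℕ, Continuous fun α => 6 * cc k * δ^k * (Real.cosh α / Real.cosh (3*α)^(2*k+1)) := by
    intro k
    have : ∀ α : ℝ, Real.cosh (3*α)^(2*k+1) ≠ 0 := fun α => (pow_pos (Real.cosh_pos _) _).ne'
    fun_prop (disch := assumption)
  rw [← lintegral_tsum (fun k => (hc k).measurable.ennreal_ofReal.aemeasurable)]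
  refine lintegral_congr fun α => ?_
  have h2 := Real.cosh_pos α
  have h3 := Real.cosh_pos (3*α)
  have h4 := Real.one_le_cosh (3*α)
  have hx : δ / Real.cosh (3*α)^2 < 1 := by
    rw [div_lt_one (by positivity)]; nlinarith
  have hs := (cc_sum (δ / Real.cosh (3*α)^2) (by positivity) hx).mul_left (6 * Real.cosh α / Real.cosh (3*α))
  have e : 6 * Real.cosh α / Real.cosh (3*α) * (1/√(1 - δ / Real.cosh (3*α)^2)) = 6 * Real.cosh α / √(Real.cosh (3*α)^2 - δ) := by
    have : Real.cosh (3*α)^2 - δ = Real.cosh (3*α)^2 * (1 - δ / Real.cosh (3*α)^2) := by field_simp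
    rw [this, Real.sqrt_mul (by positivity), Real.sqrt_sq h3.le]
    field_simp
  rw [e] at hs
  rw [← hs.tsum_eq, ENNReal.ofReal_tsum_of_nonneg _ hs.summable]
  · refine tsum_congr fun k => ?_
    congr 1
    rw [div_pow, ← pow_mul]
    field_simp
    ring
  · intro k; have := cc_pos k; positivity

theorem L11 (p : ℝ) (h0 : 0 < p) (h1 : 27*p ≤ 1) : II p = 𝓔 (2*π/√3) * FE (1-27*p) := by
  rw [← FE_int _ (by linarith) (by linarith), II]
  have s3 : 0 < √3 := by positivity
  have e3 : √3^2 = 3 := Real.sq_sqrt (by norm_num)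
  refine subR (fun α => 4/3*Real.sinh α^2) (fun α => 4/3*(2*Real.sinh α * Real.cosh α))
    (fun N => Real.arsinh (√(3/4*N))) _ _ measurableSet_Ioi ?_ ?_ ?_ ?_ ?_ ?_
  · intro α _
    refine HasDerivAt.congr_deriv (((Real.hasDerivAt_sinh α).pow 2).const_mul (4/3)) ?_
    simp
  · intro α hα
    have := Real.sinh_pos_iff.2 hα
    simp only [mem_Ioi]; positivity
  · intro N hN
    simp only [mem_Ioi] at *
    rw [Real.arsinh_pos_iff]; positivity
  · intro α hα
    have := Real.sinh_pos_iff.2 hα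
    rw [show 3/4*(4/3*Real.sinh α^2) = Real.sinh α^2 by ring, Real.sqrt_sq this.le, Real.arsinh_sinh]
  · intro N hN
    simp only [mem_Ioi] at *
    rw [Real.sinh_arsinh, Real.sq_sqrt (by positivity)]; ring
  · intro α hα
    have s := Real.sinh_pos_iff.2 hα
    have c := Real.cosh_pos α
    have s3 := Real.sinh_pos_iff.2 (show 0 < 3*α by simp only [mem_Ioi] at hα; positivity)
    rw [abs_of_pos (by positivity)]
    have k : (4/3*Real.sinh α^2)^2*((4/3*Real.sinh α^2)+1)^2+4*p*(4/3*Real.sinh α^2) =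
      (4/9*Real.sinh α)^2 * (Real.cosh (3*α)^2 - (1-27*p)) := by
      rw [Real.cosh_sq, sh3]; ring
    have : 0 < Real.cosh (3*α)^2 - (1-27*p) := by rw [Real.cosh_sq]; nlinarith
    rw [k, Real.sqrt_mul (by positivity), Real.sqrt_sq (by positivity)]
    field_simp; ring

noncomputable def yy (e ψ : ℝ) : ℝ := 27 * (((1-e)*cos ψ^2) * ((1-e)*sin ψ^2) * e)

theorem yy_le (e ψ : ℝ) (h0 : 0 < e) (h1 : e < 1) : yy e ψ ≤ 1 := by
  unfold yy
  have a : cos ψ^2 * sin ψ^2 ≤ 1/4 := by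
    have := Real.sin_sq_add_cos_sq ψ
    nlinarith [sq_nonneg (cos ψ^2 - sin ψ^2)]
  have b : 27 * (e*(1-e)^2) ≤ 4 := by
    have : 0 ≤ (3*e-1)^2*(4-3*e) := mul_nonneg (sq_nonneg _) (by linarith)
    nlinarith
  have c : 0 ≤ e*(1-e)^2 := by positivity
  calc _ = 27*(e*(1-e)^2) * (cos ψ^2 * sin ψ^2) := by ring
    _ ≤ 27*(e*(1-e)^2) * (1/4) := by gcongr
    _ ≤ 1 := by linarith

theorem yy_pos (e ψ : ℝ) (h0 : 0 < e) (h1 : e < 1) (hψ : ψ ∈ Ioo 0 (π/2)) : 0 < yy e ψ := by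
  have hp := pi_pos
  have : 0 < cos ψ := Real.cos_pos_of_mem_Ioo ⟨by linarith [hψ.1], hψ.2⟩
  have : 0 < sin ψ := Real.sin_pos_of_mem_Ioo ⟨hψ.1, by linarith [hψ.2]⟩
  have : 0 < 1 - e := by linarith
  unfold yy; positivity

theorem T2 : WW (fun w => 𝓔 (aa w)) (fun w => 𝓔 (aa w)) (fun w => 𝓔 (aa w)) =
    𝓔 (2*π/√3) * ∫⁻ e in Ioo (0:ℝ) 1, ∫⁻ ψ in Ioo 0 (π/2), 𝓔 (1/√e) * FE (1 - yy e ψ) := by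
  have hp := pi_pos
  unfold WW
  have a1 : ∀ᵐ k : ℂ, k ≠ 0 := by simp [ae_iff]
  have a2 : ∀ᵐ k : ℂ, k ≠ 1 := by simp [ae_iff]
  have s1 : (∫⁻ z : ℂ, ∫⁻ R in Ioi (0:ℝ), 𝓔 (1/(‖z‖*‖1-z‖)) * (𝓔 (aa R) * 𝓔 (aa (R*‖z‖)) * 𝓔 (aa (R*‖1-z‖)))) =
     ∫⁻ z : ℂ, 𝓔 (1/π) * ∫⁻ e in Ioo (0:ℝ) 1, ∫⁻ ψ in Ioo 0 (π/2),
      𝓔 (1/√e) * 𝓔 (1/(e*‖z‖^2*‖1-z‖^2 + (1-e)*(‖1-z‖^2*cos ψ^2 + ‖z‖^2 * sin ψ^2))) := by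
    refine lintegral_congr_ae ?_
    filter_upwards [a1, a2] with z hz1 hz2
    have p1 : 0 < ‖z‖ := norm_pos_iff.2 hz1
    have p2 : 0 < ‖1-z‖ := norm_pos_iff.2 (sub_ne_zero.2 hz2.symm)
    rw [lintegral_const_mul' _ _ ENNReal.ofReal_ne_top, L9 _ _ p1 p2]
  rw [s1, lintegral_const_mul' _ _ ENNReal.ofReal_ne_top, lintegral_lintegral_swap]
  · rw [← lintegral_const_mul' _ _ ENNReal.ofReal_ne_top, ← lintegral_const_mul' _ _ ENNReal.ofReal_ne_top]
    refine setLIntegral_congr_fun measurableSet_Ioo fun e he => ?_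
    have h0 := he.1
    have h1 : 0 < 1 - e := by linarith [he.2]
    rw [lintegral_lintegral_swap]
    · rw [← lintegral_const_mul' _ _ ENNReal.ofReal_ne_top, ← lintegral_const_mul' _ _ ENNReal.ofReal_ne_top]
      refine setLIntegral_congr_fun measurableSet_Ioo fun ψ hψ => ?_
      have c0 : 0 < cos ψ := Real.cos_pos_of_mem_Ioo ⟨by linarith [hψ.1], hψ.2⟩
      have d0 : 0 < sin ψ := Real.sin_pos_of_mem_Ioo ⟨hψ.1, by linarith [hψ.2]⟩
      rw [lintegral_const_mul' _ _ ENNReal.ofReal_ne_top]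
      have q := L10a ((1-e)*cos ψ^2) ((1-e)*sin ψ^2) e (by positivity) (by positivity) h0
        (by have := Real.sin_sq_add_cos_sq ψ; linear_combination (1-e)*this)
      have r : (∫⁻ z : ℂ, 𝓔 (1/(e*‖z‖^2*‖1-z‖^2 + (1-e)*(‖1-z‖^2*cos ψ^2 + ‖z‖^2 * sin ψ^2)))) =
        ∫⁻ z : ℂ, 𝓔 (1/(e*‖z‖^2*‖1-z‖^2 + ((1-e)*cos ψ^2*‖1-z‖^2 + (1-e)*sin ψ^2*‖z‖^2))) := by
        refine lintegral_congr fun z => ?_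
        congr 2; ring
      have yp := yy_pos e ψ h0 he.2 hψ
      have yl := yy_le e ψ h0 he.2
      unfold yy at yp yl
      rw [r, q, L10b _ ((1-e)*sin ψ^2) _ (by positivity) (by positivity) h0
        (by have := Real.sin_sq_add_cos_sq ψ; linear_combination (1-e)*this), L11 _ (by positivity) yl]
      rw [mul_left_comm (𝓔 (1/√e)), ← mul_assoc, ← ENNReal.ofReal_mul (by positivity), one_div_mul_cancel hp.ne',
        ENNReal.ofReal_one, one_mul, mul_left_comm]
      rfl
    · apply Measurable.aemeasurable
      fun_prop
  · apply Measurable.aemeasurable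
    exact Measurable.lintegral_prod_right' (f := fun p : (ℂ × ℝ) × ℝ => 𝓔 (1/√p.1.2) * 𝓔 (1/(p.1.2*‖p.1.1‖^2*‖1-p.1.1‖^2 + (1-p.1.2)*(‖1-p.1.1‖^2*cos p.2^2 + ‖p.1.1‖^2 * sin p.2^2)))) (by fun_prop)

theorem mom_split {Ω : Type*} [MeasurableSpace Ω] (μ : Measure Ω) (f : Ω → ENNReal) (u : Ω → ℝ)
    (hf : Measurable f) (hu : Measurable u) (h01 : ∀ᵐ x ∂μ, u x ∈ Icc (0:ℝ) 1) (j k : ℕ) :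
    ∫⁻ x, f x * 𝓔 (u x^j * (1 - u x)^k) ∂μ = (∫⁻ x, f x * 𝓔 (u x^j * (1 - u x)^(k+1)) ∂μ)
      + ∫⁻ x, f x * 𝓔 (u x^(j+1) * (1 - u x)^k) ∂μ := by
  rw [← lintegral_add_left (by fun_prop)]
  refine lintegral_congr_ae ?_
  filter_upwards [h01] with x hx
  have h0 := hx.1
  have h1 : 0 ≤ 1 - u x := by linarith [hx.2]
  rw [← mul_add, ← ENNReal.ofReal_add (by positivity) (by positivity)]
  congr 2; ring

theorem mom_fin {Ω : Type*} [MeasurableSpace Ω] (μ : Measure Ω) (f : Ω → ENNReal) (u : Ω → ℝ)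
    (h01 : ∀ᵐ x ∂μ, u x ∈ Icc (0:ℝ) 1) (hfin : ∫⁻ x, f x ∂μ ≠ ⊤) (j k : ℕ) :
    ∫⁻ x, f x * 𝓔 (u x^j * (1 - u x)^k) ∂μ ≠ ⊤ := by
  refine ne_top_of_le_ne_top hfin (lintegral_mono_ae ?_)
  filter_upwards [h01] with x hx
  have h0 := hx.1
  have h1 : 0 ≤ 1 - u x := by linarith [hx.2]
  have : u x^j * (1 - u x)^k ≤ 1 := mul_le_one₀ (pow_le_one₀ h0 hx.2) (by positivity) (pow_le_one₀ h1 (by linarith))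
  calc _ ≤ f x * 𝓔 1 := by gcongr
    _ = f x := by simp

theorem mom_eq {Ω Ω' : Type*} [MeasurableSpace Ω] [MeasurableSpace Ω'] (μ : Measure Ω) (ν : Measure Ω')
    (f : Ω → ENNReal) (u : Ω → ℝ) (g : Ω' → ENNReal) (v : Ω' → ℝ) (c : ENNReal)
    (hf : Measurable f) (hu : Measurable u) (h01 : ∀ᵐ x ∂μ, u x ∈ Icc (0:ℝ) 1) (hfin : ∫⁻ x, f x ∂μ ≠ ⊤)
    (hg : Measurable g) (hv : Measurable v) (h01' : ∀ᵐ x ∂ν, v x ∈ Icc (0:ℝ) 1)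
    (H : ∀ j : ℕ, ∫⁻ x, f x * 𝓔 (u x^j) ∂μ = c * ∫⁻ x, g x * 𝓔 (v x^j) ∂ν) (k j : ℕ) :
    ∫⁻ x, f x * 𝓔 (u x^j * (1 - u x)^k) ∂μ = c * ∫⁻ x, g x * 𝓔 (v x^j * (1 - v x)^k) ∂ν := by
  induction k generalizing j with
  | zero => simpa using H j
  | succ k ih =>
    have a := mom_split μ f u hf hu h01 j k
    have b := congrArg (fun t => c * t) (mom_split ν g v hg hv h01' j k)
    simp only [mul_add] at b
    rw [← ih, ← ih] at b
    have := a.symm.trans b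
    exact (ENNReal.add_left_inj (mom_fin μ f u h01 hfin _ _)).1 this

noncomputable def BB (j : ℕ) : ℕ → ℝ
  | 0 => 1/(j+1/2)
  | k+1 => BB j k * ((k+1)/(j+1/2+k+1))

theorem BB_pos (j k : ℕ) : 0 < BB j k := by
  induction k with
  | zero => rw [BB]; positivity
  | succ k ih => rw [BB]; positivity

theorem BB_succ (j k : ℕ) : BB (j+1) k = BB j k * ((j+1/2)/(j+1/2+k+1)) := by
  induction k with
  | zero => rw [BB, BB]; push_cast; field_simp; ring
  | succ k ih => rw [BB, BB, ih]; push_cast; field_simp; ring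

theorem bet (j k : ℕ) : ∫⁻ y in Ioo (0:ℝ) 1, 𝓔 (1/√y) * 𝓔 (y^j * (1-y)^k) = 𝓔 (BB j k) := by
  have h01 : ∀ᵐ y ∂(volume.restrict (Ioo (0:ℝ) 1)), y ∈ Icc (0:ℝ) 1 := by
    filter_upwards [ae_restrict_mem measurableSet_Ioo] with y hy using ⟨hy.1.le, hy.2.le⟩
  induction k generalizing j with
  | zero =>
    have hj : (-1:ℝ) < (j:ℝ) - 1/2 := by have : (0:ℝ) ≤ j := j.cast_nonneg; linarith
    have e : ∀ y ∈ Ioo (0:ℝ) 1, 𝓔 (1/√y) * 𝓔 (y^j * (1-y)^0) = 𝓔 (y^((j:ℝ)-1/2)) := by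
      intro y hy
      have := hy.1
      rw [← ENNReal.ofReal_mul (by positivity), Real.rpow_sub this, Real.rpow_natCast, ← Real.sqrt_eq_rpow]
      congr 1; simp; field_simp
    rw [setLIntegral_congr_fun measurableSet_Ioo e, setLIntegral_congr (Ioo_ae_eq_Ioc),
      ← ofReal_integral_eq_lintegral_ofReal, ← intervalIntegral.integral_of_le zero_le_one, integral_rpow (Or.inl hj)]
    · rw [BB]; congr 1
      rw [Real.one_rpow, Real.zero_rpow (by linarith)]; 
      congr 1 <;> ring
    · exact ((intervalIntegral.intervalIntegrable_rpow' hj (a := 0) (b := 1)).1)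
    · filter_upwards [ae_restrict_mem measurableSet_Ioc] with y hy
      have := hy.1
      simp only [Pi.zero_apply]; positivity
  | succ k ih =>
    have a := mom_split (volume.restrict (Ioo (0:ℝ) 1)) (fun y => 𝓔 (1/√y)) (fun y => y) (by fun_prop) (by fun_prop) h01 j k
    rw [ih, ih] at a
    have p1 := BB_pos j k
    have p2 := BB_pos (j+1) k
    have p3 := BB_pos j (k+1)
    have e : 𝓔 (BB j k) = 𝓔 (BB j (k+1)) + 𝓔 (BB (j+1) k) := by
      rw [← ENNReal.ofReal_add p3.le p2.le, BB_succ, BB]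
      congr 1; field_simp; ring
    rw [e] at a
    exact ((ENNReal.add_left_inj ENNReal.ofReal_ne_top).1 a).symm

theorem ars_int (S : ℝ) (hS : 0 < S) : ∫⁻ y in Ioo (0:ℝ) 1, 𝓔 (1/√y * (1/√(S^2+y))) = 𝓔 (2 * Real.arsinh (1/S)) := by
  have key : ∫⁻ y in Ioo (0:ℝ) 1, 𝓔 (1/√y * (1/√(S^2+y))) = ∫⁻ v in Ioo (0:ℝ) (Real.arsinh (1/S)), 𝓔 2 := by
    refine subR (fun v => S^2*Real.sinh v^2) (fun v => S^2*(2*Real.sinh v*Real.cosh v)) (fun y => Real.arsinh (√y/S)) _ _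
      measurableSet_Ioo ?_ ?_ ?_ ?_ ?_ ?_
    · intro v _
      refine HasDerivAt.congr_deriv (((Real.hasDerivAt_sinh v).pow 2).const_mul (S^2)) ?_
      simp
    · intro v hv
      have s := Real.sinh_pos_iff.2 hv.1
      refine ⟨by positivity, ?_⟩
      have h2 := Real.sinh_lt_sinh.2 hv.2
      rw [Real.sinh_arsinh, lt_div_iff₀ hS] at h2
      have : 0 < Real.sinh v * S := by positivity
      calc _ = (Real.sinh v * S)^2 := by ring
        _ < 1 := by nlinarith
    · intro y hy
      have := hy.1
      refine ⟨Real.arsinh_pos_iff.2 (by positivity), Real.arsinh_lt_arsinh.2 ?_⟩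
      gcongr
      rw [Real.sqrt_lt' one_pos]; linarith [hy.2]
    · intro v hv
      have s := Real.sinh_pos_iff.2 hv.1
      rw [← mul_pow, Real.sqrt_sq (by positivity), mul_div_cancel_left₀ _ hS.ne', Real.arsinh_sinh]
    · intro y hy
      have := hy.1
      rw [Real.sinh_arsinh, div_pow, Real.sq_sqrt this.le]; field_simp
    · intro v hv
      have s := Real.sinh_pos_iff.2 hv.1
      have c := Real.cosh_pos v
      rw [abs_of_pos (by positivity), ← mul_pow, Real.sqrt_sq (by positivity),
        show S^2 + (S*Real.sinh v)^2 = (S*Real.cosh v)^2 by rw [mul_pow, mul_pow, Real.cosh_sq]; ring,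
        Real.sqrt_sq (by positivity)]
      field_simp
  rw [key]
  simp only [lintegral_const, MeasurableSet.univ, Measure.restrict_apply, univ_inter, Real.volume_Ioo, sub_zero]
  rw [← ENNReal.ofReal_mul (by norm_num)]

theorem arsinh_le_self {x : ℝ} (hx : 0 ≤ x) : Real.arsinh x ≤ x := by
  rw [← Real.sinh_le_sinh, Real.sinh_arsinh]; exact Real.self_le_sinh_iff.2 hx

theorem arsinh_le_sqrt {x : ℝ} (hx : 0 ≤ x) : Real.arsinh x ≤ 2*√(1+2*x) := by
  have h1 : Real.arsinh x = Real.log (x + √(1+x^2)) := rfl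
  have h2 : √(1+x^2) ≤ 1 + x := by
    rw [Real.sqrt_le_left (by positivity)]; nlinarith
  have h3 : Real.arsinh x ≤ Real.log (1+2*x) := by
    rw [h1]; apply Real.log_le_log (by positivity); linarith
  have h4 : Real.log (1+2*x) = 2 * Real.log (√(1+2*x)) := by
    rw [Real.log_sqrt (by positivity)]; ring
  have h5 := Real.log_le_self (Real.sqrt_nonneg (1+2*x))
  linarith

theorem base_alpha : ∫⁻ α in Ioi (0:ℝ), 𝓔 (Real.cosh α * Real.arsinh (1/Real.sinh (3*α))) = 𝓔 (√3 * (π/6)) := by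
  have s3 : 0 < √3 := by positivity
  have e3 : √3^2 = 3 := Real.sq_sqrt (by norm_num)
  set g : ℝ → ℝ := fun α => Real.sinh α * Real.arsinh (1/Real.sinh (3*α)) + √3 * arctan (Real.tanh α / √3) with hg
  have nn : ∀ α ∈ Ioi (0:ℝ), 0 ≤ Real.cosh α * Real.arsinh (1/Real.sinh (3*α)) := by
    intro α hα
    simp only [mem_Ioi] at hα
    have c := Real.cosh_pos α
    have s := Real.sinh_pos_iff.2 (show 0 < 3*α by positivity)
    have := Real.arsinh_nonneg_iff.2 (show 0 ≤ 1/Real.sinh (3*α) by positivity)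
    positivity
  have d : ∀ α ∈ Ioi (0:ℝ), HasDerivAt g (Real.cosh α * Real.arsinh (1/Real.sinh (3*α))) α := by
    intro α hα
    simp only [mem_Ioi] at hα
    have c := Real.cosh_pos α
    have s := Real.sinh_pos_iff.2 hα
    have c3 := Real.cosh_pos (3*α)
    have s3' := Real.sinh_pos_iff.2 (show 0 < 3*α by positivity)
    have l : HasDerivAt (fun α : ℝ => 3*α) 3 α := by simpa using (hasDerivAt_id α).const_mul (3:ℝ)
    have d1 := ((hasDerivAt_const α (1:ℝ)).div l.sinh s3'.ne').arsinh
    have d2 := ((tanh_der α).div_const (√3)).arctan.const_mul (√3)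
    refine HasDerivAt.congr_deriv (((Real.hasDerivAt_sinh α).mul d1).add d2) ?_
    have q : √(1 + (1/Real.sinh (3*α))^2) = Real.cosh (3*α)/Real.sinh (3*α) := by
      rw [show 1 + (1/Real.sinh (3*α))^2 = (Real.cosh (3*α)/Real.sinh (3*α))^2 by
        field_simp; rw [Real.cosh_sq (3*α)]]
      exact Real.sqrt_sq (by positivity)
    have k : Real.cosh α ^2 = Real.sinh α^2 + 1 := Real.cosh_sq α
    simp only [Pi.div_apply, q, smul_eq_mul]
    rw [div_pow, e3, Real.tanh_eq_sinh_div_cosh]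
    have : Real.sinh α * ((Real.cosh (3*α)/Real.sinh (3*α))⁻¹ * ((0 * Real.sinh (3*α) - 1 * (Real.cosh (3*α)*3))/Real.sinh (3*α)^2))
      + √3 * (1/(1 + (Real.sinh α/Real.cosh α)^2/3) * (1/Real.cosh α^2/√3)) = 0 := by
      have z : Real.sinh α * ((Real.cosh (3*α)/Real.sinh (3*α))⁻¹ * ((0 * Real.sinh (3*α) - 1 * (Real.cosh (3*α)*3))/Real.sinh (3*α)^2))
        = - (3 * Real.sinh α / Real.sinh (3*α)) := by field_simp; ring
      have z2 : √3 * (1/(1 + (Real.sinh α/Real.cosh α)^2/3) * (1/Real.cosh α^2/√3)) = 3/(3+4*Real.sinh α^2) := by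
        field_simp
        rw [k]; ring
      rw [z, z2, sh3]; field_simp; ring
    linear_combination this
  have cont : ContinuousWithinAt g (Ici 0) 0 := by
    have g0 : g 0 = 0 := by simp [hg]
    rw [ContinuousWithinAt, g0]
    have t1 : Filter.Tendsto (fun α => √3 * arctan (Real.tanh α / √3)) (nhdsWithin 0 (Ici 0)) (nhds 0) := by
      have : Continuous (fun α => √3 * arctan (Real.tanh α / √3)) := by
        have : Continuous Real.tanh := continuous_iff_continuousAt.2 fun x => (tanh_der x).continuousAt
        fun_prop
      have := (this.tendsto 0).mono_left (nhdsWithin_le_nhds (s := Ici 0))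
      simpa using this
    have t2 : Filter.Tendsto (fun α => Real.sinh α * Real.arsinh (1/Real.sinh (3*α))) (nhdsWithin 0 (Ici 0)) (nhds 0) := by
      refine squeeze_zero' (g := fun α => 2*√(Real.sinh α^2 + 2*Real.sinh α)) ?_ ?_ ?_
      · filter_upwards [self_mem_nhdsWithin] with α hα
        have s : 0 ≤ Real.sinh α := Real.sinh_nonneg_iff.2 hα
        have s3 : 0 ≤ Real.sinh (3*α) := Real.sinh_nonneg_iff.2 (by simp only [mem_Ici] at hα; positivity)
        have := Real.arsinh_nonneg_iff.2 (show 0 ≤ 1/Real.sinh (3*α) by positivity)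
        positivity
      · filter_upwards [self_mem_nhdsWithin] with α hα
        have s : 0 ≤ Real.sinh α := Real.sinh_nonneg_iff.2 hα
        have s3 : 0 ≤ Real.sinh (3*α) := Real.sinh_nonneg_iff.2 (by simp only [mem_Ici] at hα; positivity)
        have h := arsinh_le_sqrt (show 0 ≤ 1/Real.sinh (3*α) by positivity)
        calc _ ≤ Real.sinh α * (2*√(1+2*(1/Real.sinh (3*α)))) := by gcongr
          _ = 2*√(Real.sinh α^2 * (1+2*(1/Real.sinh (3*α)))) := by
            rw [Real.sqrt_mul (by positivity), Real.sqrt_sq s]; ring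
          _ ≤ _ := by
            gcongr
            rcases s.eq_or_lt with h0 | h0
            · rw [← h0]; simp
            · have : Real.sinh α^2 * (1+2*(1/Real.sinh (3*α))) = Real.sinh α^2 + 2*Real.sinh α * (1/(3+4*Real.sinh α^2)) := by
                rw [sh3]; field_simp
              rw [this]
              have : 1/(3+4*Real.sinh α^2) ≤ 1 := by
                rw [div_le_one (by positivity)]; nlinarith [sq_nonneg (Real.sinh α)]
              nlinarith
      · have : Continuous (fun α => 2*√(Real.sinh α^2 + 2*Real.sinh α)) := by fun_prop
        have := (this.tendsto 0).mono_left (nhdsWithin_le_nhds (s := Ici 0))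
        simpa using this
    have := t2.add t1
    rw [add_zero] at this
    exact this
  have lim : Filter.Tendsto g Filter.atTop (nhds (√3*(π/6))) := by
    have t1 : Filter.Tendsto (fun α => √3 * arctan (Real.tanh α / √3)) Filter.atTop (nhds (√3 * (π/6))) := by
      have h := ((Real.continuous_arctan.tendsto _).comp (tanh_lim.div_const (√3))).const_mul (√3)
      rw [one_div, Real.arctan_inv_sqrt_three] at h
      exact h
    have t2 : Filter.Tendsto (fun α => Real.sinh α * Real.arsinh (1/Real.sinh (3*α))) Filter.atTop (nhds 0) := by
      refine squeeze_zero' (g := fun α => (1+α^2)⁻¹) ?_ ?_ inv_sq_tend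
      · filter_upwards [Filter.eventually_gt_atTop (0:ℝ)] with α hα
        have s : 0 ≤ Real.sinh α := Real.sinh_nonneg_iff.2 hα.le
        have s3 : 0 ≤ Real.sinh (3*α) := Real.sinh_nonneg_iff.2 (by positivity)
        have := Real.arsinh_nonneg_iff.2 (show 0 ≤ 1/Real.sinh (3*α) by positivity)
        positivity
      · filter_upwards [Filter.eventually_gt_atTop (0:ℝ)] with α hα
        have s : 0 < Real.sinh α := Real.sinh_pos_iff.2 hα
        have s3 : 0 ≤ Real.sinh (3*α) := Real.sinh_nonneg_iff.2 (by positivity)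
        have h := arsinh_le_self (show 0 ≤ 1/Real.sinh (3*α) by positivity)
        have h3 := sinh_sq_ge α
        calc _ ≤ Real.sinh α * (1/Real.sinh (3*α)) := by gcongr
          _ = (3 + 4*Real.sinh α^2)⁻¹ := by rw [sh3]; field_simp
          _ ≤ _ := by gcongr <;> nlinarith [sq_nonneg α]
    have := t2.add t1
    rw [zero_add] at this
    exact this
  have i1 := integrableOn_Ioi_deriv_of_nonneg cont d nn lim
  have i2 := integral_Ioi_of_hasDerivAt_of_nonneg cont d nn lim
  rw [← ofReal_integral_eq_lintegral_ofReal i1, i2]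
  · simp [hg]
  · filter_upwards [ae_restrict_mem measurableSet_Ioi] with α hα using nn α hα

theorem FE_meas : Measurable FE := by
  unfold FE
  exact Measurable.ennreal_tsum (fun k => by fun_prop)

theorem base0 : ∫⁻ y in Ioo (0:ℝ) 1, 𝓔 (1/√y) * FE (1-y) = 𝓔 3 := by
  have hp := pi_pos
  have s3 : 0 < √3 := by positivity
  have e3 : √3^2 = 3 := Real.sq_sqrt (by norm_num)
  have h : 𝓔 (2*π/√3) * ∫⁻ y in Ioo (0:ℝ) 1, 𝓔 (1/√y) * FE (1-y) = 𝓔 (2*π/√3) * 𝓔 3 := by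
    rw [← lintegral_const_mul' _ _ ENNReal.ofReal_ne_top]
    have a : ∀ y ∈ Ioo (0:ℝ) 1, 𝓔 (2*π/√3) * (𝓔 (1/√y) * FE (1-y)) =
        ∫⁻ α in Ioi (0:ℝ), 𝓔 (6 * Real.cosh α) * 𝓔 (1/√y * (1/√(Real.sinh (3*α)^2 + y))) := by
      intro y hy
      have := hy.1
      rw [mul_left_comm, ← FE_int _ (by linarith [hy.2]) (by linarith [hy.1]), ← lintegral_const_mul' _ _ ENNReal.ofReal_ne_top]
      refine lintegral_congr fun α => ?_
      have c := Real.cosh_pos α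
      rw [← ENNReal.ofReal_mul (by positivity), ← ENNReal.ofReal_mul (by positivity)]
      congr 1
      rw [Real.cosh_sq (3*α), show Real.sinh (3*α)^2+1-(1-y) = Real.sinh (3*α)^2+y by ring]
      ring
    rw [setLIntegral_congr_fun measurableSet_Ioo a, lintegral_lintegral_swap (Measurable.aemeasurable (by fun_prop))]
    have b : ∀ α ∈ Ioi (0:ℝ), (∫⁻ y in Ioo (0:ℝ) 1, 𝓔 (6 * Real.cosh α) * 𝓔 (1/√y * (1/√(Real.sinh (3*α)^2 + y)))) =
        𝓔 12 * 𝓔 (Real.cosh α * Real.arsinh (1/Real.sinh (3*α))) := by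
      intro α hα
      simp only [mem_Ioi] at hα
      have c := Real.cosh_pos α
      rw [lintegral_const_mul' _ _ ENNReal.ofReal_ne_top, ars_int _ (Real.sinh_pos_iff.2 (by positivity)),
        ← ENNReal.ofReal_mul (by positivity), ← ENNReal.ofReal_mul (by positivity)]
      congr 1; ring
    rw [setLIntegral_congr_fun measurableSet_Ioi b, lintegral_const_mul' _ _ ENNReal.ofReal_ne_top, base_alpha,
      ← ENNReal.ofReal_mul (by positivity), ← ENNReal.ofReal_mul (by positivity)]
    congr 1
    field_simp
    rw [e3]; ring
  refine (ENNReal.mul_right_inj ?_ ENNReal.ofReal_ne_top).1 h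
  simp only [ne_eq, ENNReal.ofReal_eq_zero, not_le]
  positivity

noncomputable def MM : ℕ → ℝ
  | 0 => 3
  | j+1 => MM j * ((j+1/2)^2/((j+5/6)*(j+7/6)))

theorem MM_pos (j : ℕ) : 0 < MM j := by
  induction j with
  | zero => rw [MM]; norm_num
  | succ k ih => rw [MM]; positivity

theorem mom2 (j : ℕ) : ∫⁻ y in Ioo (0:ℝ) 1, (𝓔 (1/√y) * FE (1-y)) * 𝓔 (y^j) = ∑' k, 𝓔 (FK k * BB j k) := by
  have a : ∀ y ∈ Ioo (0:ℝ) 1, (𝓔 (1/√y) * FE (1-y)) * 𝓔 (y^j) =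
      ∑' k, 𝓔 (FK k) * (𝓔 (1/√y) * 𝓔 (y^j * (1-y)^k)) := by
    intro y hy
    have h1 := hy.1
    have h2 : 0 ≤ 1 - y := by linarith [hy.2]
    unfold FE
    rw [← ENNReal.tsum_mul_left, ← ENNReal.tsum_mul_right]
    refine tsum_congr fun k => ?_
    have := (FK_pos k).le
    rw [ENNReal.ofReal_mul this, ENNReal.ofReal_mul (pow_nonneg h1.le j)]
    ring
  rw [setLIntegral_congr_fun measurableSet_Ioo a, lintegral_tsum (fun k => Measurable.aemeasurable (by fun_prop))]
  refine tsum_congr fun k => ?_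
  rw [lintegral_const_mul' _ _ ENNReal.ofReal_ne_top, bet, ← ENNReal.ofReal_mul (FK_pos k).le]

theorem gg_le (j n : ℕ) : (((j:ℝ)+1/2+n+1) * BB (j+1) n)^2 ≤ 1/((n:ℝ)+1) := by
  induction n with
  | zero =>
    rw [BB]; push_cast
    have : ((j:ℝ)+1/2+0+1) * (1/(j+1+1/2)) = 1 := by field_simp; ring
    rw [this]; norm_num
  | succ n ih =>
    have e : ((j:ℝ)+1/2+((n+1:ℕ):ℝ)+1) * BB (j+1) (n+1) = (((j:ℝ)+1/2+n+1) * BB (j+1) n) * ((n+1)/(j+1/2+n+1)) := by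
      rw [BB]; push_cast; field_simp; ring
    rw [e, mul_pow]
    have hj : (0:ℝ) ≤ j := Nat.cast_nonneg j
    calc _ ≤ 1/((n:ℝ)+1) * ((n+1)/(j+1/2+n+1))^2 := by gcongr
      _ ≤ 1/((n:ℝ)+1) * ((n+1)/(0+1/2+n+1))^2 := by gcongr
      _ ≤ _ := by
        push_cast
        rw [div_pow, div_mul_div_comm, div_le_div_iff₀ (by positivity) (by positivity)]
        have : (0:ℝ) ≤ n := Nat.cast_nonneg n
        nlinarith [mul_nonneg this this]

theorem GG_tend (j : ℕ) : Filter.Tendsto (fun n : ℕ => FK n * BB (j+1) n * n * ((j:ℝ)+1/2+n+1)) Filter.atTop (nhds 0) := by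
  have t : Filter.Tendsto (fun n : ℕ => √(1/((n:ℝ)+1))) Filter.atTop (nhds 0) := by
    have := (Real.continuous_sqrt.tendsto 0).comp tendsto_one_div_add_atTop_nhds_zero_nat
    rw [Real.sqrt_zero] at this
    exact this
  refine squeeze_zero (fun n => ?_) (fun n => ?_) t
  · have := FK_pos n
    have := BB_pos (j+1) n
    positivity
  · have f := FK_pos n
    have b := BB_pos (j+1) n
    have h1 : FK n * n ≤ 1 := by
      have := FK_le n
      calc _ ≤ 1/((n:ℝ)+1) * n := by gcongr
        _ ≤ 1 := by rw [div_mul_eq_mul_div, div_le_one (by positivity)]; linarith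
    have h2 := Real.le_sqrt_of_sq_le (gg_le j n)
    calc _ = (FK n * n) * (((j:ℝ)+1/2+n+1) * BB (j+1) n) := by ring
      _ ≤ 1 * (((j:ℝ)+1/2+n+1) * BB (j+1) n) := by gcongr
      _ ≤ _ := by rw [one_mul]; exact h2

theorem partial_eq (j n : ℕ) : ((j:ℝ)+5/6)*(j+7/6) * ∑ k ∈ Finset.range n, FK k * BB (j+1) k =
    ((j:ℝ)+1/2)^2 * (∑ k ∈ Finset.range n, FK k * BB j k) + FK n * BB (j+1) n * n * ((j:ℝ)+1/2+n+1) := by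
  induction n with
  | zero => simp
  | succ n ih =>
    rw [Finset.sum_range_succ, Finset.sum_range_succ, mul_add, ih]
    have e1 : BB j n = BB (j+1) n * ((j+1/2+n+1)/(j+1/2)) := by rw [BB_succ]; field_simp
    rw [FK, BB, e1]
    push_cast
    field_simp
    ring

theorem MM_sum (j : ℕ) : HasSum (fun k => FK k * BB j k) (MM j) := by
  induction j with
  | zero =>
    have h := mom2 0
    simp only [pow_zero, ENNReal.ofReal_one, mul_one] at h
    rw [base0] at h
    have nn : ∀ k, 0 ≤ FK k * BB 0 k := fun k => (mul_pos (FK_pos k) (BB_pos 0 k)).le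
    have s : Summable (fun k => FK k * BB 0 k) := by
      have := ENNReal.summable_toReal (f := fun k => 𝓔 (FK k * BB 0 k)) (by rw [← h]; exact ENNReal.ofReal_ne_top)
      refine this.congr fun k => ?_
      exact (ENNReal.toReal_ofReal (nn k))
    rw [← ENNReal.ofReal_tsum_of_nonneg nn s] at h
    have := s.hasSum
    have h2 := (ENNReal.ofReal_eq_ofReal_iff (by norm_num) (tsum_nonneg nn)).1 h
    rw [← h2] at this
    rw [MM]; exact this
  | succ j ih =>
    have nn : ∀ k, 0 ≤ FK k * BB (j+1) k := fun k => (mul_pos (FK_pos k) (BB_pos (j+1) k)).le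
    rw [hasSum_iff_tendsto_nat_of_nonneg nn]
    have t := ((ih.tendsto_sum_nat.const_mul (((j:ℝ)+1/2)^2)).add (GG_tend j)).const_mul ((((j:ℝ)+5/6)*(j+7/6))⁻¹)
    refine (t.congr fun n => ?_).trans (le_of_eq ?_)
    · rw [← partial_eq]; field_simp
    · congr 1; rw [MM]; field_simp; ring

theorem mom2' (j : ℕ) : ∫⁻ y in Ioo (0:ℝ) 1, (𝓔 (1/√y) * FE (1-y)) * 𝓔 (y^j) = 𝓔 (MM j) := by
  rw [mom2, ← ENNReal.ofReal_tsum_of_nonneg (fun k => (mul_pos (FK_pos k) (BB_pos j k)).le) (MM_sum j).summable,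
    (MM_sum j).tsum_eq]

noncomputable def WJ : ℕ → ℝ
  | 0 => π/2
  | j+1 => WJ j * ((2*j+1)/(8*(j+1)))

theorem WJ_int (j : ℕ) : ∫⁻ ψ in Ioo 0 (π/2), 𝓔 ((cos ψ^2*sin ψ^2)^j) = 𝓔 (WJ j) := by
  have hp := pi_pos
  have c : Continuous (fun ψ : ℝ => (cos ψ^2*sin ψ^2)^j) := by fun_prop
  have i : IntegrableOn (fun ψ : ℝ => (cos ψ^2*sin ψ^2)^j) (Ioc 0 (π/2)) :=
    (c.intervalIntegrable 0 (π/2)).1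
  rw [setLIntegral_congr Ioo_ae_eq_Ioc, ← ofReal_integral_eq_lintegral_ofReal i
    (Filter.Eventually.of_forall fun ψ => by positivity), ← intervalIntegral.integral_of_le (by positivity)]
  congr 1
  have h : ∀ ψ : ℝ, (cos ψ^2*sin ψ^2)^j = (1/4)^j * (fun z => sin z^(2*j)) (2*ψ) := by
    intro ψ
    simp only []
    rw [Real.sin_two_mul, pow_mul, ← mul_pow (1/4 : ℝ)]
    congr 1; ring
  simp_rw [h]
  rw [intervalIntegral.integral_const_mul, intervalIntegral.integral_comp_mul_left (fun z => sin z^(2*j)) two_ne_zero,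
    mul_zero, mul_div_cancel₀ _ two_ne_zero, integral_sin_pow_even]
  clear h i c
  induction j with
  | zero => rw [WJ]; simp; ring
  | succ j ih =>
    rw [WJ, ← ih, Finset.prod_range_succ]
    simp only [smul_eq_mul]
    field_simp
    ring

theorem WJ_pos (j : ℕ) : 0 < WJ j := by
  have hp := pi_pos
  induction j with
  | zero => rw [WJ]; positivity
  | succ k ih => rw [WJ]; positivity

theorem MM_eq (j : ℕ) : 27^j * BB j (2*j) * WJ j = π/3 * MM j := by
  induction j with
  | zero => simp only [BB, WJ, MM]; norm_num; ring
  | succ j ih =>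
    have e : BB (j+1) (2*(j+1)) = BB j (2*j) * ((2*j+1)*(2*j+2)*(j+1/2)/((3*j+3/2)*(3*j+5/2)*(3*j+7/2))) := by
      rw [BB_succ, show 2*(j+1) = 2*j+1+1 by ring, BB, BB]; push_cast; field_simp; ring
    rw [e, MM, WJ, pow_succ]
    have : π/3 * (MM j * (((j:ℝ) + 1 / 2) ^ 2 / ((j + 5 / 6) * (j + 7 / 6)))) = (π/3 * MM j) * (((j:ℝ) + 1 / 2) ^ 2 / ((j + 5 / 6) * (j + 7 / 6))) := by ring
    rw [this, ← ih]
    field_simp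
    ring

theorem mom1 (j : ℕ) : ∫⁻ e in Ioo (0:ℝ) 1, ∫⁻ ψ in Ioo 0 (π/2), 𝓔 (1/√e) * 𝓔 (yy e ψ^j) = 𝓔 (π/3) * 𝓔 (MM j) := by
  have hp := pi_pos
  have a : ∀ e ∈ Ioo (0:ℝ) 1, (∫⁻ ψ in Ioo 0 (π/2), 𝓔 (1/√e) * 𝓔 (yy e ψ^j)) =
      𝓔 (27^j * WJ j) * (𝓔 (1/√e) * 𝓔 (e^j * (1-e)^(2*j))) := by
    intro e he
    have h1 := he.1
    have h2 : 0 < 1 - e := by linarith [he.2]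
    have b : ∀ ψ, 𝓔 (1/√e) * 𝓔 (yy e ψ^j) = 𝓔 (1/√e * (27^j * (e^j * (1-e)^(2*j)))) * 𝓔 ((cos ψ^2*sin ψ^2)^j) := by
      intro ψ
      rw [← ENNReal.ofReal_mul (by positivity), ← ENNReal.ofReal_mul (by positivity)]
      congr 1
      unfold yy
      rw [pow_mul, mul_assoc (1/√e)]
      congr 1
      simp only [← mul_pow]
      congr 1; ring
    simp_rw [b]
    have := WJ_pos j
    rw [lintegral_const_mul' _ _ ENNReal.ofReal_ne_top, WJ_int, ← ENNReal.ofReal_mul (by positivity),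
      ← ENNReal.ofReal_mul (by positivity), ← ENNReal.ofReal_mul (by positivity)]
    congr 1; ring
  have := WJ_pos j
  rw [setLIntegral_congr_fun measurableSet_Ioo a, lintegral_const_mul' _ _ ENNReal.ofReal_ne_top, bet,
    ← ENNReal.ofReal_mul (by positivity), ← ENNReal.ofReal_mul (by positivity), ← MM_eq]
  congr 1; ring

theorem T3 : ∫⁻ e in Ioo (0:ℝ) 1, ∫⁻ ψ in Ioo 0 (π/2), 𝓔 (1/√e) * FE (1 - yy e ψ) =
    𝓔 (π/3) * ∫⁻ y in Ioo (0:ℝ) 1, 𝓔 (1/√y) * FE (1-y) * FE (1-y) := by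
  have hp := pi_pos
  have fm := FE_meas
  have ym : Measurable (fun p : ℝ × ℝ => yy p.1 p.2) := by unfold yy; fun_prop
  set μ := (volume.restrict (Ioo (0:ℝ) 1)).prod (volume.restrict (Ioo (0:ℝ) (π/2))) with hμ
  have P : ∀ F : ℝ × ℝ → ENNReal, Measurable F → ∫⁻ p, F p ∂μ = ∫⁻ e in Ioo (0:ℝ) 1, ∫⁻ ψ in Ioo 0 (π/2), F (e, ψ) :=
    fun F hF => lintegral_prod F hF.aemeasurable
  have ae1 : ∀ᵐ p ∂μ, p ∈ Ioo (0:ℝ) 1 ×ˢ Ioo (0:ℝ) (π/2) := by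
    rw [hμ, Measure.prod_restrict]
    exact ae_restrict_mem (measurableSet_Ioo.prod measurableSet_Ioo)
  have y01 : ∀ᵐ p ∂μ, yy p.1 p.2 ∈ Icc (0:ℝ) 1 := by
    filter_upwards [ae1] with p hp
    exact ⟨(yy_pos _ _ hp.1.1 hp.1.2 hp.2).le, yy_le _ _ hp.1.1 hp.1.2⟩
  have M := mom_eq μ (volume.restrict (Ioo (0:ℝ) 1)) (fun p => 𝓔 (1/√p.1)) (fun p => yy p.1 p.2)
    (fun y => 𝓔 (1/√y) * FE (1-y)) (fun y => y) (𝓔 (π/3)) (by fun_prop) ym y01 ?_ (by fun_prop) measurable_id ?_ ?_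
  · have h : ∀ k, ∫⁻ p, 𝓔 (FK k) * (𝓔 (1/√p.1) * 𝓔 ((1 - yy p.1 p.2)^k)) ∂μ
      = 𝓔 (π/3) * ∫⁻ y in Ioo (0:ℝ) 1, 𝓔 (FK k) * (𝓔 (1/√y) * FE (1-y) * 𝓔 ((1-y)^k)) := by
      intro k
      have := M k 0
      simp only [pow_zero, one_mul] at this
      rw [lintegral_const_mul' _ _ ENNReal.ofReal_ne_top, lintegral_const_mul' _ _ ENNReal.ofReal_ne_top, this]
      ring
    have h2 : ∑' k, _ = ∑' k, _ := tsum_congr h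
    rw [ENNReal.tsum_mul_left, ← lintegral_tsum (fun k => Measurable.aemeasurable (by fun_prop)),
      ← lintegral_tsum (fun k => Measurable.aemeasurable (by fun_prop))] at h2
    have q : ∀ x, FE x = ∑' k, 𝓔 (FK k) * 𝓔 (x^k) := by
      intro x
      unfold FE
      exact tsum_congr fun k => ENNReal.ofReal_mul (FK_pos k).le
    rw [← P (fun p => 𝓔 (1/√p.1) * FE (1 - yy p.1 p.2)) (by fun_prop)]
    refine Eq.trans (lintegral_congr fun p => ?_) (h2.trans ?_)
    · rw [q, ← ENNReal.tsum_mul_left]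
      exact tsum_congr fun k => by ring
    · congr 1
      refine lintegral_congr fun y => ?_
      generalize 𝓔 (1/√y) * FE (1-y) = A
      rw [q (1-y), ← ENNReal.tsum_mul_left]
      exact tsum_congr fun k => by ring
  · have := mom1 0
    simp only [pow_zero, ENNReal.ofReal_one, mul_one] at this
    rw [P _ (by fun_prop), this]
    exact ENNReal.mul_ne_top ENNReal.ofReal_ne_top ENNReal.ofReal_ne_top
  · filter_upwards [ae_restrict_mem measurableSet_Ioo] with y hy using ⟨hy.1.le, hy.2.le⟩
  · intro j
    rw [P _ (by fun_prop), mom2']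
    exact mom1 j

theorem FK_ris (n : ℕ) : ris (1/3) n * ris (2/3) n / ris 1 n / (n.factorial : ℝ) = FK n := by
  have h1 : ∀ n, 0 < ris 1 n := fun n => Finset.prod_pos fun k _ => by positivity
  induction n with
  | zero => simp [ris, FK]
  | succ n ih =>
    have := h1 n
    have st : ∀ a, ris a (n+1) = ris a n * (a + n) := fun a => Finset.prod_range_succ _ _
    have hf : (n.factorial : ℝ) ≠ 0 := by positivity
    rw [FK, ← ih, st, st, st, Nat.factorial_succ]
    push_cast
    rw [add_comm (1:ℝ) n]
    field_simp
    ring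

theorem pFq_eq (x : ℝ) : pFq [1/3, 2/3] [1] x = ∑' n, FK n * x^n := by
  unfold pFq
  refine tsum_congr fun n => ?_
  rw [← FK_ris]
  simp only [List.map_cons, List.map_nil, List.prod_cons, List.prod_nil, mul_one]
  ring

theorem pFq_nonneg (x : ℝ) (h0 : 0 ≤ x) : 0 ≤ pFq [1/3, 2/3] [1] x := by
  rw [pFq_eq]
  exact tsum_nonneg fun n => mul_nonneg (FK_pos n).le (pow_nonneg h0 n)

theorem pFq_FE (x : ℝ) (h0 : 0 ≤ x) (h1 : x < 1) : 𝓔 (pFq [1/3, 2/3] [1] x) = FE x := by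
  rw [pFq_eq]
  unfold FE
  refine ENNReal.ofReal_tsum_of_nonneg (fun n => mul_nonneg (FK_pos n).le (pow_nonneg h0 n)) ?_
  refine Summable.of_nonneg_of_le (fun n => mul_nonneg (FK_pos n).le (pow_nonneg h0 n)) (fun n => ?_) (summable_geometric_of_lt_one h0 h1)
  have : FK n ≤ 1 := (FK_le n).trans (by rw [div_le_one (by positivity)]; linarith [Nat.cast_nonneg (α := ℝ) n])
  exact mul_le_of_le_one_left (pow_nonneg h0 n) this

theorem rhs_eq : ∫ x in (0:ℝ)..1, (pFq [1/3, 2/3] [1] x)^2 / Real.sqrt (1 - x) =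
    (∫⁻ y in Ioo (0:ℝ) 1, 𝓔 (1/√y) * FE (1-y) * FE (1-y)).toReal := by
  have fm := FE_meas
  have e0 : ∫⁻ y in Ioo (0:ℝ) 1, 𝓔 (1/√y) * FE (1-y) * FE (1-y) = ∫⁻ x in Ioo (0:ℝ) 1, 𝓔 (1/√(1-x)) * FE x * FE x := by
    rw [← lintegral_indicator measurableSet_Ioo, ← lintegral_indicator measurableSet_Ioo,
      ← lintegral_sub_left_eq_self _ (1:ℝ)]
    refine lintegral_congr fun x => ?_
    by_cases hx : x ∈ Ioo (0:ℝ) 1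
    · have hx2 : 1 - x ∈ Ioo (0:ℝ) 1 := ⟨by linarith [hx.2], by linarith [hx.1]⟩
      rw [indicator_of_mem hx, indicator_of_mem hx2, sub_sub_cancel]
    · have hx2 : 1 - x ∉ Ioo (0:ℝ) 1 := fun h => hx ⟨by linarith [h.2], by linarith [h.1]⟩
      rw [indicator_of_notMem hx, indicator_of_notMem hx2]
  have k : ∀ x ∈ Ioo (0:ℝ) 1, 𝓔 ((pFq [1/3, 2/3] [1] x)^2 / √(1-x)) = 𝓔 (1/√(1-x)) * FE x * FE x := by
    intro x hx
    have p := pFq_nonneg x hx.1.le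
    rw [← pFq_FE x hx.1.le hx.2, ← ENNReal.ofReal_mul (by positivity), ← ENNReal.ofReal_mul (by positivity)]
    congr 1; ring
  rw [intervalIntegral.integral_of_le zero_le_one, ← setIntegral_congr_set Ioo_ae_eq_Ioc, integral_eq_lintegral_of_nonneg_ae, e0,
    setLIntegral_congr_fun measurableSet_Ioo k]
  · filter_upwards [ae_restrict_mem measurableSet_Ioo] with x hx
    have p := pFq_nonneg x hx.1.le
    simp only [Pi.zero_apply]
    positivity
  · have m : Measurable (fun x : ℝ => (𝓔 (1/√(1-x)) * FE x * FE x).toReal) := by fun_prop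
    refine m.aestronglyMeasurable.congr ?_
    filter_upwards [ae_restrict_mem measurableSet_Ioo] with x hx
    have p := pFq_nonneg x hx.1.le
    rw [← k x hx, ENNReal.toReal_ofReal (by positivity)]

theorem lhs_eq : ∫ t in Ioi (0:ℝ), I0 t * (K0 t)^5 * t = (∫⁻ t in Ioi (0:ℝ), 𝓔 (I0 t * K0 t^5 * t)).toReal := by
  rw [integral_eq_lintegral_of_nonneg_ae]
  · filter_upwards [ae_restrict_mem measurableSet_Ioi] with t ht
    simp only [mem_Ioi] at ht
    have := I0_nonneg t
    have := K0_nonneg t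
    simp only [Pi.zero_apply]
    positivity
  · have := I0_cont.measurable
    have := K0_meas
    exact Measurable.aestronglyMeasurable (by fun_prop)

theorem sunrise_eq_laporta_single_integral :
    16 * (∫ t in Ioi (0:ℝ), I0 t * (K0 t)^5 * t)
    = (4 * Real.sqrt 3 * π^3 / 27) *
        ∫ x in (0:ℝ)..1, (pFq [1/3, 2/3] [1] x)^2 / Real.sqrt (1 - x) := by
  have hp := pi_pos
  have e3 : √3^2 = 3 := Real.sq_sqrt (by norm_num)
  have h := congrArg ENNReal.toReal IKM4
  rw [T2, T3] at h
  simp only [ENNReal.toReal_mul] at h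
  rw [← lhs_eq, ← rhs_eq, ENNReal.toReal_ofReal (by norm_num), ENNReal.toReal_ofReal (by positivity),
    ENNReal.toReal_ofReal (by positivity), ENNReal.toReal_ofReal (by positivity)] at h
  have s : 2*π/√3 = 2*π*√3/3 := by
    have : 0 < √3 := by positivity
    field_simp
    rw [e3]
  rw [s] at h
  linear_combination (2/3 : ℝ) * h
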